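/- arXiv:1706.09924 — 3 statements merged into one kernel-verified Lean document; each statement's English description precedes it below -/
import Mathlib

section
/- For all x, v ∈ ℝ^d and r > 0 with |v| < r < |x|, (Γ(d/2)^2 / (π^d |Γ(-α/2)| Γ(α/2))) ∫_{r<|z|<|x|} (|x|^2 - |z|^2)^{α/2} / ( (|z|^2 - |v|^2)^{α/2} |z - v|^d |z - x|^d ) dz = π^{-(d/2+1)} Γ(d/2) sin(πα/2) · (|x|^2 - r^2)^{α/2} / ( (r^2 - |v|^2)^{α/2} |x - v|^d ). (This identity expresses that integrating out the point-of-closest-reach variable in Corollary 1.4(i) recovers the Blumenthal–Getoor–Ray first-entrance density of the ball of radius r.) -/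
open MeasureTheory Real Set

/-!
In polar coordinates everything reduces to the mean of `‖z - v‖⁻ᵈ ‖z - x‖⁻ᵈ` over a sphere `‖z‖ = ρ`
separating `v` from `x`; by scaling, take `ρ = 1`. Up to a constant, `a⁻ᵈ b⁻ᵈ` is the integral of
`(a² eᵗ + b² e⁻ᵗ)⁻ᵈ` over `t ∈ ℝ` (Feynman's parametrisation, symmetrised), and for `a = ‖ω - v‖`,
`b = ‖ω - x‖` with `‖ω‖ = 1` the base is an affine function `c - ⟪m, ω⟫` of `ω`. The spherical mean
of `(c - ⟪m, ω⟫)⁻ᵈ` is the volume of the ellipsoid `c ‖z‖ - ⟪m, z⟫ < 1`, which has a focus at the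
origin, relative to that of the unit ball. The remaining integral over `t` is a multiple of the
constant `∫ (cosh t)⁻ᵈ` that Feynman's parametrisation introduced, so both disappear. What is left
is radial and is the derivative of a multiple of `((‖x‖² - ρ²) / (ρ² - ‖v‖²)) ^ (α / 2)`; the
constants match by the reflection formula for `Γ`.
-/

section RealIntegrals

theorem lintegral_cosh_mul_comp_mul_sinh {k : ℝ} (hk : 0 < k) (F : ℝ → ENNReal) :
    ∫⁻ t, ENNReal.ofReal (k * cosh t) * F (k * sinh t) = ∫⁻ u, F u := by
  have hrange : range (fun t ↦ k * sinh t) = univ :=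
    ((mul_left_surjective₀ hk.ne').comp sinh_surjective).range_eq
  have h := lintegral_image_eq_lintegral_deriv_mul_of_monotoneOn MeasurableSet.univ
    (fun t _ ↦ ((hasDerivAt_sinh t).const_mul k).hasDerivWithinAt)
    ((sinh_strictMono.monotone.const_mul hk.le).monotoneOn _) F
  simpa [hrange] using h.symm

theorem lintegral_exp_add_exp_neg_mul_of_even {a b : ℝ} (ha : 0 ≤ a) (hb : 0 ≤ b)
    {G : ℝ → ENNReal} (hGm : Measurable G) (hG : G.Even) :
    ∫⁻ t, ENNReal.ofReal (a * exp t + b * exp (-t)) * G t =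
      ENNReal.ofReal (a + b) * ∫⁻ t, ENNReal.ofReal (exp t) * G t := by
  have hreflect : ∫⁻ t, ENNReal.ofReal (exp (-t)) * G t = ∫⁻ t, ENNReal.ofReal (exp t) * G t := by
    rw [← lintegral_neg_eq_self]
    simp only [neg_neg, hG _]
  have hsplit (t : ℝ) : ENNReal.ofReal (a * exp t + b * exp (-t)) * G t =
      ENNReal.ofReal a * (ENNReal.ofReal (exp t) * G t) +
        ENNReal.ofReal b * (ENNReal.ofReal (exp (-t)) * G t) := by
    rw [ENNReal.ofReal_add (by positivity) (by positivity), ENNReal.ofReal_mul ha,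
      ENNReal.ofReal_mul hb, add_mul, mul_assoc, mul_assoc]
  simp_rw [hsplit]
  rw [lintegral_add_left (by fun_prop), lintegral_const_mul _ (by fun_prop),
    lintegral_const_mul _ (by fun_prop), hreflect, ← add_mul, ← ENNReal.ofReal_add ha hb]

theorem lintegral_cosh_mul_of_even {G : ℝ → ENNReal} (hGm : Measurable G) (hG : G.Even) :
    ∫⁻ t, ENNReal.ofReal (cosh t) * G t = ∫⁻ t, ENNReal.ofReal (exp t) * G t := by
  have hcosh (t : ℝ) : cosh t = 1 / 2 * exp t + 1 / 2 * exp (-t) := by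
    rw [cosh_eq]
    ring
  simp_rw [hcosh]
  rw [lintegral_exp_add_exp_neg_mul_of_even (by norm_num) (by norm_num) hGm hG, add_halves,
    ENNReal.ofReal_one, one_mul]

theorem lintegral_one_div_sqrt_one_add_sq_pow (n : ℕ) :
    ∫⁻ u : ℝ, ENNReal.ofReal (1 / √(1 + u ^ 2) ^ (n + 1)) =
      ∫⁻ t, ENNReal.ofReal (1 / cosh t ^ n) := by
  rw [← lintegral_cosh_mul_comp_mul_sinh one_pos]
  refine lintegral_congr fun t ↦ ?_
  have := cosh_pos t
  simp only [one_mul]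
  rw [add_comm, ← cosh_sq, sqrt_sq this.le, ← ENNReal.ofReal_mul this.le]
  congr 1
  field_simp
  ring

theorem lintegral_one_div_cosh_pow_ne_top {n : ℕ} (hn : n ≠ 0) :
    ∫⁻ t, ENNReal.ofReal (1 / cosh t ^ n) ≠ ⊤ := by
  rw [← lintegral_one_div_sqrt_one_add_sq_pow]
  refine ((lintegral_mono fun u ↦ ENNReal.ofReal_le_ofReal ?_).trans_lt
    integrable_inv_one_add_sq.lintegral_lt_top).ne
  have hone : 1 ≤ √(1 + u ^ 2) := one_le_sqrt.2 (by nlinarith)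
  rw [one_div]
  refine inv_anti₀ (by positivity) ?_
  calc 1 + u ^ 2 = √(1 + u ^ 2) ^ 2 := (sq_sqrt (by positivity)).symm
    _ ≤ √(1 + u ^ 2) ^ (n + 1) := pow_le_pow_right₀ hone (by omega)

theorem lintegral_one_div_cosh_pow_ne_zero (n : ℕ) :
    ∫⁻ t, ENNReal.ofReal (1 / cosh t ^ n) ≠ 0 := by
  rw [Ne, lintegral_eq_zero_iff (by fun_prop)]
  intro h
  obtain ⟨t, ht⟩ := h.exists
  have := cosh_pos t
  exact (ENNReal.ofReal_pos.2 (by positivity)).ne' ht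

theorem lintegral_one_div_sq_mul_exp_add_pow (n : ℕ) {a b : ℝ} (ha : 0 < a) (hb : 0 < b) :
    ∫⁻ t, ENNReal.ofReal (1 / (a ^ 2 * exp t + b ^ 2 * exp (-t)) ^ n) =
      ENNReal.ofReal (1 / (2 * a * b) ^ n) * ∫⁻ t, ENNReal.ofReal (1 / cosh t ^ n) := by
  rw [← lintegral_const_mul _ (by fun_prop), ← lintegral_add_right_eq_self _ (log (b / a))]
  refine lintegral_congr fun t ↦ ?_
  rw [← ENNReal.ofReal_mul (by positivity), one_div_mul_one_div, ← mul_pow, neg_add, exp_add,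
    exp_add, exp_neg (log _), exp_log (by positivity), cosh_eq]
  congr 3
  field_simp

theorem lintegral_one_div_pow_mul_pow_mul_lintegral_cosh {Ω : Type*} [MeasurableSpace Ω]
    (ν : Measure Ω) [SFinite ν] (n : ℕ) {a b : Ω → ℝ} (ham : Measurable a) (hbm : Measurable b)
    (ha : ∀ ω, 0 < a ω) (hb : ∀ ω, 0 < b ω) :
    (∫⁻ ω, ENNReal.ofReal (1 / (a ω ^ n * b ω ^ n)) ∂ν) * ∫⁻ t, ENNReal.ofReal (1 / cosh t ^ n) =
      ENNReal.ofReal (2 ^ n) * ∫⁻ t : ℝ, (∫⁻ ω,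
        ENNReal.ofReal (1 / (a ω ^ 2 * exp t + b ω ^ 2 * exp (-t)) ^ n) ∂ν) := by
  rw [lintegral_lintegral_swap (by fun_prop), ← lintegral_mul_const _ (by fun_prop),
    ← lintegral_const_mul' _ _ ENNReal.ofReal_ne_top]
  refine lintegral_congr fun ω ↦ ?_
  have := ha ω
  have := hb ω
  rw [lintegral_one_div_sq_mul_exp_add_pow n (ha ω) (hb ω), ← mul_assoc,
    ← ENNReal.ofReal_mul (by positivity), mul_pow, mul_pow]
  congr 2
  field_simp

theorem lintegral_cosh_div_sqrt_sinh_sq_add_sq_pow (n : ℕ) {k L : ℝ} (hk : 0 < k) (hL : 0 < L) :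
    ∫⁻ t, ENNReal.ofReal (cosh t / √((k * sinh t) ^ 2 + L ^ 2) ^ (n + 1)) =
      ENNReal.ofReal (1 / (k * L ^ n)) * ∫⁻ t, ENNReal.ofReal (1 / cosh t ^ n) := by
  rw [← lintegral_one_div_sqrt_one_add_sq_pow,
    ← lintegral_cosh_mul_comp_mul_sinh (k := k / L) (by positivity)
      (fun u ↦ ENNReal.ofReal (1 / √(1 + u ^ 2) ^ (n + 1))),
    ← lintegral_const_mul _ (by fun_prop)]
  refine lintegral_congr fun t ↦ ?_
  have hroot : √((k * sinh t) ^ 2 + L ^ 2) = L * √(1 + (k / L * sinh t) ^ 2) := by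
    rw [sqrt_eq_iff_mul_self_eq (by positivity) (by positivity), mul_mul_mul_comm,
      mul_self_sqrt (by positivity)]
    field_simp
    ring
  have := cosh_pos t
  rw [hroot, ← ENNReal.ofReal_mul (by positivity), ← ENNReal.ofReal_mul (by positivity)]
  congr 1
  field_simp
  ring

theorem lintegral_exp_add_div_sqrt_pow (n : ℕ) {a b p q L : ℝ} (ha : 0 ≤ a) (hb : 0 ≤ b)
    (hp : 0 < p) (hq : 0 < q) (hL : 0 < L) :
    ∫⁻ t, ENNReal.ofReal ((a * exp t + b * exp (-t)) /
        √((p ^ 2 * exp t - q ^ 2 * exp (-t)) ^ 2 + L ^ 2) ^ (n + 1)) =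
      ENNReal.ofReal ((a / p ^ 2 + b / q ^ 2) / (2 * L ^ n)) *
        ∫⁻ t, ENNReal.ofReal (1 / cosh t ^ n) := by
  have hsinh (t : ℝ) : p ^ 2 * (exp t * (q / p)) - q ^ 2 * (exp (-t) * (q / p)⁻¹) =
      2 * p * q * sinh t := by
    rw [sinh_eq]
    field_simp
  have heven : Function.Even fun t ↦
      ENNReal.ofReal (1 / √((2 * p * q * sinh t) ^ 2 + L ^ 2) ^ (n + 1)) :=
    fun t ↦ by simp
  calc
    _ = ∫⁻ t, ENNReal.ofReal (a * q / p * exp t + b * p / q * exp (-t)) *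
        ENNReal.ofReal (1 / √((2 * p * q * sinh t) ^ 2 + L ^ 2) ^ (n + 1)) := by
      rw [← lintegral_add_right_eq_self _ (log (q / p))]
      refine lintegral_congr fun t ↦ ?_
      rw [neg_add, exp_add, exp_add, exp_neg (log _), exp_log (by positivity), hsinh,
        ← ENNReal.ofReal_mul (by positivity)]
      congr 1
      field_simp
    _ = ENNReal.ofReal (a * q / p + b * p / q) * ∫⁻ t, ENNReal.ofReal (cosh t) *
        ENNReal.ofReal (1 / √((2 * p * q * sinh t) ^ 2 + L ^ 2) ^ (n + 1)) := by
      rw [lintegral_exp_add_exp_neg_mul_of_even (by positivity) (by positivity) (by fun_prop)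
        heven, lintegral_cosh_mul_of_even (by fun_prop) heven]
    _ = ENNReal.ofReal (a * q / p + b * p / q) * (ENNReal.ofReal (1 / (2 * p * q * L ^ n)) *
        ∫⁻ t, ENNReal.ofReal (1 / cosh t ^ n)) := by
      simp_rw [← ENNReal.ofReal_mul (cosh_pos _).le, mul_one_div]
      rw [lintegral_cosh_div_sqrt_sinh_sq_add_sq_pow n (by positivity) hL]
    _ = _ := by
      rw [← mul_assoc, ← ENNReal.ofReal_mul (by positivity)]
      congr 2
      field_simp

theorem lintegral_Ioo_ofReal_deriv {g g' : ℝ → ℝ} {a b : ℝ} (hab : a ≤ b)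
    (hcont : ContinuousOn g (Icc a b)) (hderiv : ∀ x ∈ Ioo a b, HasDerivAt g (g' x) x)
    (hnonneg : ∀ x ∈ Ioo a b, 0 ≤ g' x) :
    ∫⁻ x in Ioo a b, ENNReal.ofReal (g' x) = ENNReal.ofReal (g b - g a) := by
  have hint : IntegrableOn g' (Ioc a b) :=
    intervalIntegral.integrableOn_deriv_of_nonneg hcont hderiv hnonneg
  rw [← ofReal_integral_eq_lintegral_ofReal (hint.mono_set Ioo_subset_Ioc_self)
      ((ae_restrict_mem measurableSet_Ioo).mono hnonneg), ← integral_Ioc_eq_integral_Ioo,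
    ← intervalIntegral.integral_of_le hab,
    intervalIntegral.integral_eq_sub_of_hasDerivAt_of_le hab hcont hderiv
      ((intervalIntegrable_iff_integrableOn_Ioc_of_le hab).2 hint)]

theorem hasDerivAt_sub_sq_div_sq_sub {R V ρ : ℝ} (hρ : ρ ^ 2 - V ≠ 0) :
    HasDerivAt (fun ρ ↦ (R - ρ ^ 2) / (ρ ^ 2 - V)) (-(2 * ρ * (R - V)) / (ρ ^ 2 - V) ^ 2) ρ := by
  refine (((hasDerivAt_pow 2 ρ).const_sub R).fun_div ((hasDerivAt_pow 2 ρ).sub_const V)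
    hρ).congr_deriv ?_
  ring

theorem lintegral_Ioo_rpow_mul_logDeriv {V R r a : ℝ} (hr : 0 ≤ r) (hV : V < r ^ 2)
    (hrR : r < R) (ha : 0 < a) :
    ∫⁻ ρ in Ioo r R, ENNReal.ofReal ((R ^ 2 - ρ ^ 2) ^ a / (ρ ^ 2 - V) ^ a *
        (ρ * (R ^ 2 - V) / ((ρ ^ 2 - V) * (R ^ 2 - ρ ^ 2)))) =
      ENNReal.ofReal ((R ^ 2 - r ^ 2) ^ a / (r ^ 2 - V) ^ a / (2 * a)) := by
  have hsub {ρ : ℝ} (h : r ≤ ρ) : 0 < ρ ^ 2 - V := by nlinarith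
  have hsub' {ρ : ℝ} (h : ρ ∈ Ioo r R) : 0 < R ^ 2 - ρ ^ 2 := by nlinarith [h.1, h.2]
  have hRV := hsub hrR.le
  rw [lintegral_Ioo_ofReal_deriv
    (g := fun ρ ↦ -(((R ^ 2 - ρ ^ 2) / (ρ ^ 2 - V)) ^ a / (2 * a))) hrR.le]
  · congr 1
    rw [sub_self, zero_div, zero_rpow ha.ne', div_rpow (by nlinarith) (hsub le_rfl).le]
    ring
  · refine (ContinuousOn.rpow_const (.div (by fun_prop) (by fun_prop) fun ρ hρ ↦ ?_)
      fun _ _ ↦ .inr ha.le).div_const _ |>.neg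
    exact (hsub hρ.1).ne'
  · intro ρ hρ
    have h1 := hsub hρ.1.le
    have h2 := hsub' hρ
    have hu : 0 < (R ^ 2 - ρ ^ 2) / (ρ ^ 2 - V) := by positivity
    refine (((hasDerivAt_sub_sq_div_sq_sub h1.ne').rpow_const (p := a) (.inl hu.ne')).div_const
      (2 * a)).fun_neg.congr_deriv ?_
    rw [rpow_sub_one hu.ne', div_rpow h2.le h1.le]
    field_simp
  · intro ρ hρ
    have h0 : 0 ≤ ρ := hr.trans hρ.1.le
    have h1 := hsub hρ.1.le
    have h2 := hsub' hρ
    positivity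

end RealIntegrals

section PolarCoordinates

open Module Metric

variable {E : Type*} [NormedAddCommGroup E] [NormedSpace ℝ E] [FiniteDimensional ℝ E]
  [Nontrivial E] [MeasurableSpace E] [BorelSpace E] (μ : Measure E) [μ.IsAddHaarMeasure]

theorem lintegral_volumeIoiPow (n : ℕ) {g : ℝ → ENNReal} (hg : Measurable g) :
    ∫⁻ ρ, g ρ ∂Measure.volumeIoiPow n = ∫⁻ ρ in Ioi (0 : ℝ), ENNReal.ofReal (ρ ^ n) * g ρ := by
  rw [Measure.volumeIoiPow, lintegral_withDensity_eq_lintegral_mul _ (by fun_prop) (by fun_prop),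
    ← lintegral_subtype_comap measurableSet_Ioi]
  rfl

theorem lintegral_eq_lintegral_toSphere_Ioi {f : E → ENNReal} (hf : Measurable f) :
    ∫⁻ z, f z ∂μ = ∫⁻ ω : sphere (0 : E) 1, (∫⁻ ρ in Ioi (0 : ℝ),
      ENNReal.ofReal (ρ ^ (finrank ℝ E - 1)) * f (ρ • (ω : E))) ∂μ.toSphere := by
  have hpres := μ.measurePreserving_homeomorphUnitSphereProd
  have hpolar : Measurable fun q : sphere (0 : E) 1 × Ioi (0 : ℝ) ↦ f ((q.2 : ℝ) • (q.1 : E)) :=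
    hf.comp (by fun_prop)
  calc
    ∫⁻ z, f z ∂μ = ∫⁻ z : ({0}ᶜ : Set E), f z ∂μ.comap (↑) := by
      rw [lintegral_subtype_comap (measurableSet_singleton _).compl, restrict_compl_singleton]
    _ = ∫⁻ z : ({0}ᶜ : Set E), f (((homeomorphUnitSphereProd E z).2 : ℝ) •
        ((homeomorphUnitSphereProd E z).1 : E)) ∂μ.comap (↑) := by
      refine lintegral_congr fun z ↦ ?_
      simp [smul_smul, norm_ne_zero_iff.2 z.2]
    _ = ∫⁻ ω : sphere (0 : E) 1, ∫⁻ ρ : Ioi (0 : ℝ), f ((ρ : ℝ) • (ω : E))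
        ∂Measure.volumeIoiPow (finrank ℝ E - 1) ∂μ.toSphere := by
      rw [hpres.lintegral_comp hpolar, lintegral_prod _ hpolar.aemeasurable]
    _ = _ := lintegral_congr fun ω ↦ lintegral_volumeIoiPow _ (g := fun ρ ↦ f (ρ • (ω : E)))
      (by fun_prop)

theorem lintegral_norm_preimage_eq_lintegral_toSphere {A : Set ℝ} (hA : MeasurableSet A)
    (hApos : A ⊆ Ioi 0) {f : E → ENNReal} (hf : Measurable f) :
    ∫⁻ z in norm ⁻¹' A, f z ∂μ = ∫⁻ ρ in A, ENNReal.ofReal (ρ ^ (finrank ℝ E - 1)) *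
      ∫⁻ ω : sphere (0 : E) 1, f (ρ • (ω : E)) ∂μ.toSphere := by
  have hshell : MeasurableSet (norm ⁻¹' A : Set E) := measurable_norm hA
  have hrestrict (ω : sphere (0 : E) 1) :
      ∫⁻ ρ in Ioi (0 : ℝ), ENNReal.ofReal (ρ ^ (finrank ℝ E - 1)) *
        (norm ⁻¹' A).indicator f (ρ • (ω : E)) =
      ∫⁻ ρ in A, ENNReal.ofReal (ρ ^ (finrank ℝ E - 1)) * f (ρ • (ω : E)) := by
    rw [← inter_eq_left.2 hApos, ← setLIntegral_indicator hA, inter_eq_left.2 hApos]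
    refine setLIntegral_congr_fun measurableSet_Ioi fun ρ (hρ : 0 < ρ) ↦ ?_
    by_cases hρA : ρ ∈ A <;> simp [norm_smul, abs_of_pos hρ, hρA]
  rw [← lintegral_indicator hshell, lintegral_eq_lintegral_toSphere_Ioi μ (hf.indicator hshell)]
  simp_rw [hrestrict]
  rw [lintegral_lintegral_swap (by fun_prop)]
  refine lintegral_congr fun ρ ↦ ?_
  rw [lintegral_const_mul _ (by fun_prop)]

theorem lintegral_toSphere_one_div_pow_of_homogeneous {N : E → ℝ} (hN : Measurable N)
    (hsmul : ∀ ρ : ℝ, 0 < ρ → ∀ ω, N (ρ • ω) = ρ * N ω)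
    (hpos : ∀ ω ∈ sphere (0 : E) 1, 0 < N ω) :
    ∫⁻ ω : sphere (0 : E) 1, ENNReal.ofReal (1 / N ω ^ finrank ℝ E) ∂μ.toSphere =
      finrank ℝ E * μ {z | N z < 1} := by
  obtain ⟨n, hn⟩ : ∃ n, finrank ℝ E = n + 1 := Nat.exists_eq_add_one.2 finrank_pos
  have hset : MeasurableSet {z | N z < 1} := measurableSet_lt hN measurable_const
  have hradial (ω : sphere (0 : E) 1) : ∫⁻ ρ in Ioi (0 : ℝ), ENNReal.ofReal (ρ ^ n) *
      {z | N z < 1}.indicator 1 (ρ • (ω : E)) =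
      ENNReal.ofReal (1 / N ω ^ finrank ℝ E / (n + 1)) := by
    have hω := hpos ω ω.2
    calc
      _ = ∫⁻ ρ in Ioi (0 : ℝ), (Iio (1 / N ω)).indicator (fun ρ ↦ ENNReal.ofReal (ρ ^ n)) ρ := by
        refine setLIntegral_congr_fun measurableSet_Ioi fun ρ (hρ : 0 < ρ) ↦ ?_
        simp [indicator_apply, hsmul ρ hρ, lt_div_iff₀ hω, -one_div]
      _ = ∫⁻ ρ in Ioo 0 (1 / N ω), ENNReal.ofReal (ρ ^ n) := by
        rw [setLIntegral_indicator measurableSet_Iio, Iio_inter_Ioi]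
      _ = _ := by
        rw [lintegral_Ioo_ofReal_deriv (g := fun ρ ↦ ρ ^ (n + 1) / (n + 1)) (by positivity)
          (by fun_prop) (fun ρ _ ↦ ?_) fun ρ hρ ↦ pow_nonneg hρ.1.le n, hn]
        · simp
        · refine ((hasDerivAt_pow (n + 1) ρ).div_const _).congr_deriv ?_
          push_cast
          field_simp
  rw [← lintegral_indicator_one hset,
    lintegral_eq_lintegral_toSphere_Ioi μ (measurable_one.indicator hset), hn, Nat.add_sub_cancel,
    ← lintegral_const_mul' _ _ (by simp)]
  refine lintegral_congr fun ω ↦ ?_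
  rw [hradial, hn, ← ENNReal.ofReal_natCast, ← ENNReal.ofReal_mul (by positivity)]
  congr 1
  push_cast
  field_simp

end PolarCoordinates

section Ellipsoid

open Module Metric

variable {E : Type*} [NormedAddCommGroup E] [InnerProductSpace ℝ E]

/-- The linear part of an affine map from the ellipsoid of revolution `c * ‖z‖ - ⟪m, z⟫ < 1`, with
one focus at the origin, onto a ball. Here `e` is the square root of `c ^ 2 - ‖m‖ ^ 2`; it is kept
as a free parameter so that the formula for the map stays rational. -/
noncomputable def focalMap (c e : ℝ) (m : E) : E →ₗ[ℝ] E :=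
  c • LinearMap.transvection (-(1 / (c * (c + e))) • innerₛₗ ℝ m) m

theorem focalMap_apply {c e : ℝ} (hc : c ≠ 0) (m z : E) :
    focalMap c e m z = c • z - (inner ℝ m z / (c + e)) • m := by
  have hcoef : c * (-(1 / (c * (c + e))) * inner ℝ m z) = -(inner ℝ m z / (c + e)) := by
    field_simp
  rw [focalMap, LinearMap.smul_apply, LinearMap.transvection.apply, smul_add, smul_smul,
    sub_eq_add_neg, ← neg_smul]
  exact congrArg (c • z + · • m) hcoef

theorem norm_focalMap_sub_sq {c e : ℝ} {m : E} (hc : 0 < c) (he : 0 < e)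
    (hm : ‖m‖ ^ 2 + e ^ 2 = c ^ 2) (z : E) :
    ‖focalMap c e m z - (1 / e) • m‖ ^ 2 =
      (c * ‖z‖) ^ 2 - (1 + inner ℝ m z) ^ 2 + (c / e) ^ 2 := by
  rw [focalMap_apply hc.ne', ← real_inner_self_eq_norm_sq]
  simp only [inner_sub_left, inner_sub_right, inner_smul_left, inner_smul_right,
    real_inner_self_eq_norm_sq, real_inner_comm m z, conj_trivial]
  rw [eq_sub_of_add_eq hm]
  field_simp
  ring

theorem focalMap_preimage_ball {c e : ℝ} {m : E} (hc : 0 < c) (he : 0 < e)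
    (hm : ‖m‖ ^ 2 + e ^ 2 = c ^ 2) :
    focalMap c e m ⁻¹' ball ((1 / e) • m) (c / e) = {z | c * ‖z‖ - inner ℝ m z < 1} := by
  ext z
  have hmc : ‖m‖ ≤ c := (sq_le_sq₀ (norm_nonneg m) hc.le).1 (by nlinarith)
  have hinner : -(c * ‖z‖) ≤ inner ℝ m z :=
    calc -(c * ‖z‖) ≤ -(‖m‖ * ‖z‖) := by gcongr
      _ ≤ inner ℝ m z := neg_le_of_abs_le (abs_real_inner_le_norm m z)
  have hcz : 0 ≤ c * ‖z‖ := by positivity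
  rw [mem_preimage, mem_ball_iff_norm, ← sq_lt_sq₀ (norm_nonneg _) (by positivity),
    norm_focalMap_sub_sq hc he hm, add_lt_iff_neg_right, sub_neg, sq_lt_sq, abs_of_nonneg hcz,
    lt_abs, mem_ofPred_eq, sub_lt_iff_lt_add]
  refine or_iff_left ?_
  linarith

variable [FiniteDimensional ℝ E]

theorem det_focalMap {c e : ℝ} {m : E} (hc : 0 < c) (he : 0 < e) (hm : ‖m‖ ^ 2 + e ^ 2 = c ^ 2) :
    LinearMap.det (focalMap c e m) = c ^ finrank ℝ E * (e / c) := by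
  rw [focalMap, LinearMap.det_smul, LinearMap.transvection.det, LinearMap.smul_apply,
    innerₛₗ_apply_apply, real_inner_self_eq_norm_sq, eq_sub_of_add_eq hm, smul_eq_mul]
  congr 1
  field_simp
  ring

variable [MeasurableSpace E] [BorelSpace E] (μ : Measure E) [μ.IsAddHaarMeasure]

theorem measure_setOf_mul_norm_sub_inner_lt_one {c e : ℝ} {m : E} (hc : 0 < c) (he : 0 < e)
    (hm : ‖m‖ ^ 2 + e ^ 2 = c ^ 2) :
    μ {z | c * ‖z‖ - inner ℝ m z < 1} =
      ENNReal.ofReal (c / e ^ (finrank ℝ E + 1)) * μ (ball 0 1) := by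
  have hdet := det_focalMap hc he hm
  rw [← focalMap_preimage_ball hc he hm,
    Measure.addHaar_preimage_linearMap _ (by rw [hdet]; positivity), hdet,
    Measure.addHaar_ball_of_pos _ _ (by positivity), ← mul_assoc,
    ← ENNReal.ofReal_mul (by positivity), abs_of_pos (by positivity), div_pow]
  congr 2
  field_simp
  ring

theorem lintegral_toSphere_one_div_sub_inner_pow [Nontrivial E] {c e : ℝ} {m : E} (hc : 0 < c)
    (he : 0 < e) (hm : ‖m‖ ^ 2 + e ^ 2 = c ^ 2) :
    ∫⁻ ω : sphere (0 : E) 1, ENNReal.ofReal (1 / (c - inner ℝ m (ω : E)) ^ finrank ℝ E)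
        ∂μ.toSphere =
      ENNReal.ofReal (c / e ^ (finrank ℝ E + 1)) * μ.toSphere univ := by
  have hmc : ‖m‖ < c := (sq_lt_sq₀ (norm_nonneg m) hc.le).1 (by nlinarith)
  have hgauge := lintegral_toSphere_one_div_pow_of_homogeneous μ
    (N := fun z ↦ c * ‖z‖ - inner ℝ m z) (by fun_prop)
    (fun ρ hρ ω ↦ by
      rw [norm_smul, norm_of_nonneg hρ.le, inner_smul_right]
      ring)
    (fun ω hω ↦ by
      rw [mem_sphere_zero_iff_norm] at hω
      have := real_inner_le_norm m ω
      rw [hω] at this ⊢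
      linarith)
  rw [measure_setOf_mul_norm_sub_inner_lt_one μ hc he hm, mul_left_comm,
    ← Measure.toSphere_apply_univ] at hgauge
  rw [← hgauge]
  refine lintegral_congr fun ω ↦ ?_
  rw [mem_sphere_zero_iff_norm.1 ω.2, mul_one]

end Ellipsoid

section SphereKernels

open Module Metric

variable {E : Type*} [NormedAddCommGroup E] [InnerProductSpace ℝ E]

theorem norm_sub_sq_mul_add_norm_sub_sq_mul {ω : E} (hω : ‖ω‖ = 1) (v x : E) (s t : ℝ) :
    ‖ω - v‖ ^ 2 * s + ‖ω - x‖ ^ 2 * t =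
      (1 + ‖v‖ ^ 2) * s + (1 + ‖x‖ ^ 2) * t - inner ℝ ((2 * s) • v + (2 * t) • x) ω := by
  rw [norm_sub_sq_real, norm_sub_sq_real, hω, inner_add_left, real_inner_smul_left,
    real_inner_smul_left, real_inner_comm v, real_inner_comm x]
  ring

theorem norm_smul_add_smul_sq_add_discrim (v x : E) (s t : ℝ) :
    ‖(2 * s) • v + (2 * t) • x‖ ^ 2 +
        (((1 - ‖v‖ ^ 2) * s - (‖x‖ ^ 2 - 1) * t) ^ 2 + 4 * (s * t) * ‖x - v‖ ^ 2) =
      ((1 + ‖v‖ ^ 2) * s + (1 + ‖x‖ ^ 2) * t) ^ 2 := by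
  rw [norm_add_sq_real, norm_sub_sq_real, norm_smul, norm_smul, mul_pow, mul_pow, norm_eq_abs,
    norm_eq_abs, sq_abs, sq_abs, real_inner_smul_left, real_inner_smul_right, real_inner_comm v x]
  ring

variable [FiniteDimensional ℝ E] [Nontrivial E] [MeasurableSpace E] [BorelSpace E]
  (μ : Measure E) [μ.IsAddHaarMeasure]

theorem lintegral_toSphere_one_div_norm_sub_sq_add_pow {v x : E} (hvx : v ≠ x) {s t : ℝ}
    (hs : 0 < s) (ht : 0 < t) :
    ∫⁻ ω : sphere (0 : E) 1,
        ENNReal.ofReal (1 / (‖(ω : E) - v‖ ^ 2 * s + ‖(ω : E) - x‖ ^ 2 * t) ^ finrank ℝ E)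
          ∂μ.toSphere =
      ENNReal.ofReal (((1 + ‖v‖ ^ 2) * s + (1 + ‖x‖ ^ 2) * t) /
        √(((1 - ‖v‖ ^ 2) * s - (‖x‖ ^ 2 - 1) * t) ^ 2 + 4 * (s * t) * ‖x - v‖ ^ 2) ^
          (finrank ℝ E + 1)) * μ.toSphere univ := by
  have hdist : 0 < ‖x - v‖ := norm_sub_pos_iff.2 hvx.symm
  rw [← lintegral_toSphere_one_div_sub_inner_pow μ (by positivity) (by positivity)
    (by rw [sq_sqrt (by positivity), norm_smul_add_smul_sq_add_discrim])]
  refine lintegral_congr fun ω ↦ ?_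
  rw [norm_sub_sq_mul_add_norm_sub_sq_mul (mem_sphere_zero_iff_norm.1 ω.2)]

theorem lintegral_toSphere_one_div_norm_sub_pow_mul_norm_sub_pow {v x : E} (hv : ‖v‖ < 1)
    (hx : 1 < ‖x‖) :
    ∫⁻ ω : sphere (0 : E) 1,
        ENNReal.ofReal (1 / (‖(ω : E) - v‖ ^ finrank ℝ E * ‖(ω : E) - x‖ ^ finrank ℝ E))
          ∂μ.toSphere =
      ENNReal.ofReal ((‖x‖ ^ 2 - ‖v‖ ^ 2) / ((1 - ‖v‖ ^ 2) * (‖x‖ ^ 2 - 1) *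
        ‖x - v‖ ^ finrank ℝ E)) * μ.toSphere univ := by
  have hoff {y : E} (hy : ‖y‖ ≠ 1) (ω : sphere (0 : E) 1) : 0 < ‖(ω : E) - y‖ := by
    refine norm_sub_pos_iff.2 ?_
    rintro rfl
    exact hy (mem_sphere_zero_iff_norm.1 ω.2)
  have hvx : v ≠ x := by
    rintro rfl
    exact hv.not_gt hx
  have hdist : 0 < ‖x - v‖ := norm_sub_pos_iff.2 hvx.symm
  have hv1 : 0 < 1 - ‖v‖ ^ 2 := by nlinarith [norm_nonneg v]
  have hx1 : 0 < ‖x‖ ^ 2 - 1 := by nlinarith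
  have hmean (t : ℝ) : ∫⁻ ω : sphere (0 : E) 1, ENNReal.ofReal
        (1 / (‖(ω : E) - v‖ ^ 2 * exp t + ‖(ω : E) - x‖ ^ 2 * exp (-t)) ^ finrank ℝ E)
          ∂μ.toSphere =
      ENNReal.ofReal (((1 + ‖v‖ ^ 2) * exp t + (1 + ‖x‖ ^ 2) * exp (-t)) /
        √((√(1 - ‖v‖ ^ 2) ^ 2 * exp t - √(‖x‖ ^ 2 - 1) ^ 2 * exp (-t)) ^ 2 +
          (2 * ‖x - v‖) ^ 2) ^ (finrank ℝ E + 1)) * μ.toSphere univ := by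
    have hdiscrim : (2 * ‖x - v‖) ^ 2 = 4 * (exp t * exp (-t)) * ‖x - v‖ ^ 2 := by
      rw [← exp_add, add_neg_cancel, exp_zero]
      ring
    rw [lintegral_toSphere_one_div_norm_sub_sq_add_pow μ hvx (exp_pos _) (exp_pos _),
      sq_sqrt hv1.le, sq_sqrt hx1.le, hdiscrim]
  rw [← ENNReal.mul_left_inj (lintegral_one_div_cosh_pow_ne_zero (finrank ℝ E))
    (lintegral_one_div_cosh_pow_ne_top finrank_pos.ne'),
    lintegral_one_div_pow_mul_pow_mul_lintegral_cosh _ _ (by fun_prop) (by fun_prop)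
      (hoff hv.ne) (hoff hx.ne')]
  simp_rw [hmean]
  rw [lintegral_mul_const _ (by fun_prop), lintegral_exp_add_div_sqrt_pow _ (by positivity)
    (by positivity) (sqrt_pos.2 hv1) (sqrt_pos.2 hx1) (by positivity), sq_sqrt hv1.le,
    sq_sqrt hx1.le, ← mul_assoc, ← mul_assoc, mul_right_comm, ← ENNReal.ofReal_mul (by positivity)]
  congr 3
  field_simp
  ring

theorem lintegral_toSphere_one_div_norm_smul_sub_pow_mul {v x : E} {ρ : ℝ}
    (hv : ‖v‖ < ρ) (hx : ρ < ‖x‖) :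
    ENNReal.ofReal (ρ ^ (finrank ℝ E - 1)) * ∫⁻ ω : sphere (0 : E) 1, ENNReal.ofReal
        (1 / (‖ρ • (ω : E) - v‖ ^ finrank ℝ E * ‖ρ • (ω : E) - x‖ ^ finrank ℝ E)) ∂μ.toSphere =
      ENNReal.ofReal (ρ * (‖x‖ ^ 2 - ‖v‖ ^ 2) / ((ρ ^ 2 - ‖v‖ ^ 2) * (‖x‖ ^ 2 - ρ ^ 2)) /
        ‖x - v‖ ^ finrank ℝ E) * μ.toSphere univ := by
  obtain ⟨n, hn⟩ : ∃ n, finrank ℝ E = n + 1 := Nat.exists_eq_add_one.2 finrank_pos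
  have hρ : 0 < ρ := (norm_nonneg v).trans_lt hv
  have hnorm (z : E) : ‖ρ⁻¹ • z‖ = ‖z‖ / ρ := by
    rw [norm_smul_of_nonneg (by positivity), inv_mul_eq_div]
  have hscale (ω z : E) : ‖ρ • ω - z‖ = ρ * ‖ω - ρ⁻¹ • z‖ := by
    rw [← norm_smul_of_nonneg hρ.le, smul_sub, smul_inv_smul₀ hρ.ne']
  have hunit := lintegral_toSphere_one_div_norm_sub_pow_mul_norm_sub_pow μ (v := ρ⁻¹ • v)
    (x := ρ⁻¹ • x) (by rwa [hnorm, div_lt_one hρ]) (by rwa [hnorm, one_lt_div hρ])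
  have hv1 : 0 < ρ ^ 2 - ‖v‖ ^ 2 := by nlinarith [norm_nonneg v]
  have hx1 : 0 < ‖x‖ ^ 2 - ρ ^ 2 := by nlinarith
  have hdist : 0 < ‖x - v‖ := by linarith [norm_sub_norm_le x v]
  calc
    _ = ENNReal.ofReal (ρ ^ n) * (ENNReal.ofReal (1 / ρ ^ (2 * (n + 1))) *
        ∫⁻ ω : sphere (0 : E) 1, ENNReal.ofReal
          (1 / (‖(ω : E) - ρ⁻¹ • v‖ ^ finrank ℝ E * ‖(ω : E) - ρ⁻¹ • x‖ ^ finrank ℝ E))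
            ∂μ.toSphere) := by
      rw [← lintegral_const_mul' (ENNReal.ofReal (1 / ρ ^ (2 * (n + 1)))) _ ENNReal.ofReal_ne_top,
        hn, Nat.add_sub_cancel]
      refine congrArg _ (lintegral_congr fun ω ↦ ?_)
      rw [hscale, hscale, ← ENNReal.ofReal_mul (by positivity), one_div_mul_one_div]
      congr 2
      ring
    _ = _ := by
      rw [hunit, ← smul_sub, hnorm, hnorm, hnorm, hn, ← mul_assoc, ← mul_assoc,
        ← ENNReal.ofReal_mul (by positivity), ← ENNReal.ofReal_mul (by positivity), div_pow ‖x - v‖]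
      congr 2
      field_simp
      ring

end SphereKernels

section GammaConstant

theorem abs_Gamma_neg_mul_Gamma {a : ℝ} (h0 : 0 < a) (h1 : a < 1) :
    |Gamma (-a)| * Gamma a = π / (a * sin (π * a)) := by
  have hneg : Gamma (1 - a) = a * |Gamma (-a)| := by
    rw [← abs_of_pos (Gamma_pos_of_pos (sub_pos.2 h1)), ← neg_add_eq_sub,
      Real.Gamma_add_one (neg_ne_zero.2 h0.ne'), abs_mul, abs_neg, abs_of_pos h0]
  rw [mul_comm a, ← div_div, ← Real.Gamma_mul_Gamma_one_sub, hneg]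
  field_simp

theorem Gamma_sq_div_mul_sphereArea_div {s a : ℝ} (hs : 0 < s) (h0 : 0 < a) (h1 : a < 1) :
    Gamma s ^ 2 / (π ^ (2 * s) * |Gamma (-a)| * Gamma a) * (2 * π ^ s / Gamma s / (2 * a)) =
      π ^ (-(s + 1)) * Gamma s * sin (π * a) := by
  have hsin : 0 < sin (π * a) :=
    sin_pos_of_pos_of_lt_pi (by positivity) (mul_lt_of_lt_one_right pi_pos h1)
  have := Gamma_pos_of_pos hs
  have : 0 < π ^ s := by positivity
  rw [mul_assoc (π ^ _), abs_Gamma_neg_mul_Gamma h0 h1, mul_comm 2 s, rpow_mul pi_pos.le,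
    rpow_two, rpow_neg pi_pos.le, rpow_add_one pi_ne_zero]
  field_simp

end GammaConstant

section Shell

open Module Metric

variable {E : Type*} [NormedAddCommGroup E] [InnerProductSpace ℝ E] [FiniteDimensional ℝ E]
  [Nontrivial E] [MeasurableSpace E] [BorelSpace E]

theorem lintegral_norm_preimage_radial_mul_one_div (μ : Measure E) [μ.IsAddHaarMeasure] {v x : E}
    {A : Set ℝ} (hA : MeasurableSet A) (hAvx : A ⊆ Ioo ‖v‖ ‖x‖) {W : ℝ → ℝ} (hWm : Measurable W)
    (hW : ∀ ρ ∈ A, 0 ≤ W ρ) :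
    ∫⁻ z in norm ⁻¹' A, ENNReal.ofReal
        (W ‖z‖ * (1 / (‖z - v‖ ^ finrank ℝ E * ‖z - x‖ ^ finrank ℝ E))) ∂μ =
      ENNReal.ofReal (1 / ‖x - v‖ ^ finrank ℝ E) * (∫⁻ ρ in A, ENNReal.ofReal
        (W ρ * (ρ * (‖x‖ ^ 2 - ‖v‖ ^ 2) / ((ρ ^ 2 - ‖v‖ ^ 2) * (‖x‖ ^ 2 - ρ ^ 2))))) *
          μ.toSphere univ := by
  have hApos : A ⊆ Ioi 0 := fun ρ hρ ↦ (norm_nonneg v).trans_lt (hAvx hρ).1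
  rw [lintegral_norm_preimage_eq_lintegral_toSphere μ hA hApos (by fun_prop),
    ← lintegral_const_mul' _ _ ENNReal.ofReal_ne_top, ← lintegral_mul_const _ (by fun_prop)]
  refine setLIntegral_congr_fun hA fun ρ hρ ↦ ?_
  have hradial (ω : sphere (0 : E) 1) : W ‖ρ • (ω : E)‖ = W ρ := by
    rw [norm_smul_of_nonneg (hApos hρ).le, mem_sphere_zero_iff_norm.1 ω.2, mul_one]
  simp_rw [hradial, ENNReal.ofReal_mul (hW ρ hρ)]
  rw [lintegral_const_mul' _ _ ENNReal.ofReal_ne_top, mul_left_comm,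
    lintegral_toSphere_one_div_norm_smul_sub_pow_mul μ (hAvx hρ).1 (hAvx hρ).2, ← mul_assoc,
    div_eq_mul_one_div _ (‖x - v‖ ^ _), mul_comm (_ / _) (1 / _),
    ENNReal.ofReal_mul (by positivity), mul_left_comm]

theorem lintegral_shell_mul_one_div (μ : Measure E) [μ.IsAddHaarMeasure] {v x : E} {r a : ℝ}
    (hv : ‖v‖ < r) (hx : r < ‖x‖) (ha : 0 < a) :
    ∫⁻ z in norm ⁻¹' Ioo r ‖x‖, ENNReal.ofReal ((‖x‖ ^ 2 - ‖z‖ ^ 2) ^ a /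
        ((‖z‖ ^ 2 - ‖v‖ ^ 2) ^ a * ‖z - v‖ ^ finrank ℝ E * ‖z - x‖ ^ finrank ℝ E)) ∂μ =
      ENNReal.ofReal ((‖x‖ ^ 2 - r ^ 2) ^ a /
        ((r ^ 2 - ‖v‖ ^ 2) ^ a * ‖x - v‖ ^ finrank ℝ E) / (2 * a)) * μ.toSphere univ := by
  have hr : 0 < r := (norm_nonneg v).trans_lt hv
  have hradial := lintegral_norm_preimage_radial_mul_one_div μ (v := v) (x := x)
    (measurableSet_Ioo (a := r) (b := ‖x‖)) (Ioo_subset_Ioo_left hv.le)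
    (W := fun ρ ↦ (‖x‖ ^ 2 - ρ ^ 2) ^ a / (ρ ^ 2 - ‖v‖ ^ 2) ^ a) (by fun_prop) fun ρ hρ ↦ by
      have : 0 ≤ ‖x‖ ^ 2 - ρ ^ 2 := by nlinarith [hρ.1, hρ.2]
      have : 0 ≤ ρ ^ 2 - ‖v‖ ^ 2 := by nlinarith [hρ.1, norm_nonneg v]
      positivity
  rw [lintegral_Ioo_rpow_mul_logDeriv hr.le (by nlinarith [norm_nonneg v]) hx ha,
    ← ENNReal.ofReal_mul (by positivity)] at hradial
  simp_rw [mul_one_div, div_div, ← mul_assoc] at hradial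
  rw [hradial]
  congr 2
  field_simp

theorem integral_shell_mul_one_div (μ : Measure E) [μ.IsAddHaarMeasure] {v x : E} {r a : ℝ}
    (hv : ‖v‖ < r) (hx : r < ‖x‖) (ha : 0 < a) :
    ∫ z in norm ⁻¹' Ioo r ‖x‖, (‖x‖ ^ 2 - ‖z‖ ^ 2) ^ a /
        ((‖z‖ ^ 2 - ‖v‖ ^ 2) ^ a * ‖z - v‖ ^ finrank ℝ E * ‖z - x‖ ^ finrank ℝ E) ∂μ =
      (‖x‖ ^ 2 - r ^ 2) ^ a / ((r ^ 2 - ‖v‖ ^ 2) ^ a * ‖x - v‖ ^ finrank ℝ E) / (2 * a) *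
        μ.toSphere.real univ := by
  have hv0 := norm_nonneg v
  have hnonneg : ∀ z ∈ (norm ⁻¹' Ioo r ‖x‖ : Set E), 0 ≤ (‖x‖ ^ 2 - ‖z‖ ^ 2) ^ a /
      ((‖z‖ ^ 2 - ‖v‖ ^ 2) ^ a * ‖z - v‖ ^ finrank ℝ E * ‖z - x‖ ^ finrank ℝ E) := fun z hz ↦ by
    have : 0 ≤ ‖x‖ ^ 2 - ‖z‖ ^ 2 := by nlinarith [hz.2, norm_nonneg z]
    have : 0 ≤ ‖z‖ ^ 2 - ‖v‖ ^ 2 := by nlinarith [hz.1]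
    positivity
  have hshell : MeasurableSet (norm ⁻¹' Ioo r ‖x‖ : Set E) := measurable_norm measurableSet_Ioo
  have : 0 ≤ r ^ 2 - ‖v‖ ^ 2 := by nlinarith
  have : 0 ≤ ‖x‖ ^ 2 - r ^ 2 := by nlinarith
  rw [integral_eq_lintegral_of_nonneg_ae ((ae_restrict_mem hshell).mono hnonneg)
      (Measurable.aestronglyMeasurable (by fun_prop)),
    lintegral_shell_mul_one_div μ hv hx ha, ENNReal.toReal_mul,
    ENNReal.toReal_ofReal (by positivity), Measure.real]

theorem toSphere_real_univ_volume :
    (volume : Measure E).toSphere.real univ =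
      2 * π ^ ((finrank ℝ E : ℝ) / 2) / Gamma ((finrank ℝ E : ℝ) / 2) := by
  have hdim : 0 < (finrank ℝ E : ℝ) := Nat.cast_pos.2 finrank_pos
  have := Gamma_pos_of_pos (half_pos hdim)
  rw [Measure.toSphere_real_apply_univ, Measure.real, InnerProductSpace.volume_ball,
    Real.Gamma_add_one (half_pos hdim).ne', ENNReal.ofReal_one, one_pow, one_mul,
    ENNReal.toReal_ofReal (by positivity), sqrt_eq_rpow, ← rpow_natCast, ← rpow_mul pi_pos.le,
    one_div_mul_eq_div]
  field_simp

theorem marginalise_closest_reach_gives_BGR_general {α : ℝ} (hα0 : 0 < α) (hα2 : α < 2)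
    {r : ℝ} {x v : E} (hv : ‖v‖ < r) (hx : r < ‖x‖) :
    (Gamma ((finrank ℝ E : ℝ) / 2) ^ 2 /
        (π ^ (finrank ℝ E : ℝ) * |Gamma (-α / 2)| * Gamma (α / 2))) *
      ∫ z in {z : E | r < ‖z‖ ∧ ‖z‖ < ‖x‖}, (‖x‖ ^ 2 - ‖z‖ ^ 2) ^ (α / 2) /
        ((‖z‖ ^ 2 - ‖v‖ ^ 2) ^ (α / 2) * ‖z - v‖ ^ finrank ℝ E * ‖z - x‖ ^ finrank ℝ E) =
      π ^ (-((finrank ℝ E : ℝ) / 2 + 1)) * Gamma ((finrank ℝ E : ℝ) / 2) * sin (π * α / 2) *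
        ((‖x‖ ^ 2 - r ^ 2) ^ (α / 2) /
          ((r ^ 2 - ‖v‖ ^ 2) ^ (α / 2) * ‖x - v‖ ^ finrank ℝ E)) := by
  have hdim : 0 < (finrank ℝ E : ℝ) / 2 := half_pos (Nat.cast_pos.2 finrank_pos)
  have hconst := Gamma_sq_div_mul_sphereArea_div hdim (half_pos hα0) (by linarith)
  rw [mul_div_cancel₀ _ two_ne_zero] at hconst
  rw [show {z : E | r < ‖z‖ ∧ ‖z‖ < ‖x‖} = norm ⁻¹' Ioo r ‖x‖ from rfl,
    integral_shell_mul_one_div volume hv hx (half_pos hα0), toSphere_real_univ_volume, neg_div,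
    mul_div_assoc π, ← hconst]
  ring

end Shell

theorem marginalise_closest_reach_gives_BGR
    (d : ℕ) (hd : 2 ≤ d) (α : ℝ) (hα0 : 0 < α) (hα2 : α < 2)
    (r : ℝ) (hr : 0 < r)
    (x v : EuclideanSpace ℝ (Fin d)) (hv : ‖v‖ < r) (hx : r < ‖x‖) :
    (Real.Gamma ((d : ℝ) / 2) ^ 2 /
        (π ^ (d : ℝ) * |Real.Gamma (-α / 2)| * Real.Gamma (α / 2))) *
      ∫ z in {z : EuclideanSpace ℝ (Fin d) | r < ‖z‖ ∧ ‖z‖ < ‖x‖},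
        (‖x‖ ^ 2 - ‖z‖ ^ 2) ^ (α / 2) /
          ((‖z‖ ^ 2 - ‖v‖ ^ 2) ^ (α / 2) * ‖z - v‖ ^ d * ‖z - x‖ ^ d)
      = π ^ (-((d : ℝ) / 2 + 1)) * Real.Gamma ((d : ℝ) / 2) * Real.sin (π * α / 2) *
          ((‖x‖ ^ 2 - r ^ 2) ^ (α / 2) /
            ((r ^ 2 - ‖v‖ ^ 2) ^ (α / 2) * ‖x - v‖ ^ d)) := by
  have : Nonempty (Fin d) := Fin.pos_iff_nonempty.1 (by omega)
  simpa only [finrank_euclideanSpace_fin] using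
    marginalise_closest_reach_gives_BGR_general hα0 hα2 hv hx
end

section
/- Fix x ∈ ℝ^d with x ≠ 0, and let g : ℝ^d → ℝ be continuous with compact support contained in {z ∈ ℝ^d : |z| > |x|}. For 0 < r < |x| set ζ_r(x,z) = (|x|^2 - r^2)(|z|^2 - r^2)/(r^2 |x - z|^2). Then lim_{r→|x|⁻} [ ∫_{|z|>|x|} g(z) |x - z|^{α-d} ( ∫_0^{ζ_r(x,z)} (u+1)^{-d/2} u^{α/2-1} du ) dz ] / [ ∫_0^{(|x|^2 - r^2)/r^2} (u+1)^{-d/2} u^{α/2-1} du ] = ∫_{|z|>|x|} g(z) |x - z|^{-d} (|z|^2 - |x|^2)^{α/2} dz. (This is the analytic limit underlying Proposition 6.2 on occupation integrals of the radial excursion measure.) -/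
open MeasureTheory Real Set Filter

/-!
Write `s = (|x|² - r²) / r²` and `q = (|z|² - r²) / |x - z|²`, so that `ζ_r(x, z) = s q`. Bounding
`(u + 1) ^ (-b)` on `(0, t)` by its values at the end points squeezes
`∫₀ᵗ (u + 1) ^ (-b) u ^ (p - 1) du` between `(t + 1) ^ (-b) t ^ p / p` and `t ^ p / p`. Hence the
quotient of the integrals up to `s q` and up to `s` lies between `(s q + 1) ^ (-b) q ^ p` and
`(s + 1) ^ b q ^ p`: it tends to `q ^ p` as `s → 0`, and the upper bound is the domination needed
to pass to the limit under the integral over `z`.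
-/

open scoped Topology

/-- The incomplete integral `∫₀ᵗ (u + 1) ^ (-b) u ^ (p - 1) du` of the unnormalised beta prime
density with parameters `p` and `b - p`. It is parametrised by the total exponent `b`, which may be
smaller than `p` because only finite upper limits `t` occur. -/
noncomputable def incompleteBetaPrime (b p t : ℝ) : ℝ :=
  ∫ u in Ioo (0 : ℝ) t, (u + 1) ^ (-b) * u ^ (p - 1)

section IncompleteBetaPrime

variable {b p s q t : ℝ}

lemma integrableOn_Ioo_rpow_sub_one (hp : 0 < p) (t : ℝ) :
    IntegrableOn (fun u : ℝ => u ^ (p - 1)) (Ioo 0 t) := by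
  rcases le_or_gt t 0 with ht | ht
  · simp only [Ioo_eq_empty_of_le ht, integrableOn_empty]
  · exact (intervalIntegral.integrableOn_Ioo_rpow_iff ht).2 (by linarith)

lemma setIntegral_Ioo_rpow_sub_one (hp : 0 < p) (ht : 0 ≤ t) :
    ∫ u in Ioo (0 : ℝ) t, u ^ (p - 1) = t ^ p / p := by
  rw [← integral_Ioc_eq_integral_Ioo, ← intervalIntegral.integral_of_le ht,
    integral_rpow (Or.inl (by linarith)), sub_add_cancel, zero_rpow hp.ne', sub_zero]

lemma add_one_rpow_neg_le_one (hb : 0 ≤ b) {u : ℝ} (hu : 0 < u) : (u + 1) ^ (-b) ≤ 1 :=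
  rpow_le_one_of_one_le_of_nonpos (by linarith) (by linarith)

lemma add_one_rpow_mul_rpow_nonneg (b p : ℝ) {u : ℝ} (hu : 0 < u) :
    0 ≤ (u + 1) ^ (-b) * u ^ (p - 1) := by
  positivity

lemma integrableOn_add_one_rpow_mul_rpow (hb : 0 ≤ b) (hp : 0 < p) (t : ℝ) :
    IntegrableOn (fun u : ℝ => (u + 1) ^ (-b) * u ^ (p - 1)) (Ioo 0 t) := by
  refine (integrableOn_Ioo_rpow_sub_one hp t).mono' (by fun_prop)
    (ae_restrict_of_forall_mem measurableSet_Ioo fun u hu => ?_)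
  rw [norm_of_nonneg (add_one_rpow_mul_rpow_nonneg b p hu.1)]
  exact mul_le_of_le_one_left (rpow_nonneg hu.1.le _) (add_one_rpow_neg_le_one hb hu.1)

lemma incompleteBetaPrime_nonneg (b p t : ℝ) : 0 ≤ incompleteBetaPrime b p t :=
  setIntegral_nonneg measurableSet_Ioo fun _ hu => add_one_rpow_mul_rpow_nonneg b p hu.1

lemma monotone_incompleteBetaPrime (hb : 0 ≤ b) (hp : 0 < p) :
    Monotone (incompleteBetaPrime b p) := fun _ t hst =>
  setIntegral_mono_set (integrableOn_add_one_rpow_mul_rpow hb hp t)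
    (ae_restrict_of_forall_mem measurableSet_Ioo fun _ hu =>
      add_one_rpow_mul_rpow_nonneg b p hu.1)
    (Ioo_subset_Ioo_right hst).eventuallyLE

lemma incompleteBetaPrime_le (hb : 0 ≤ b) (hp : 0 < p) (ht : 0 ≤ t) :
    incompleteBetaPrime b p t ≤ t ^ p / p := by
  rw [← setIntegral_Ioo_rpow_sub_one hp ht]
  exact setIntegral_mono_on (integrableOn_add_one_rpow_mul_rpow hb hp t)
    (integrableOn_Ioo_rpow_sub_one hp t) measurableSet_Ioo fun u hu =>
      mul_le_of_le_one_left (rpow_nonneg hu.1.le _) (add_one_rpow_neg_le_one hb hu.1)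

lemma le_incompleteBetaPrime (hb : 0 ≤ b) (hp : 0 < p) (ht : 0 ≤ t) :
    (t + 1) ^ (-b) * (t ^ p / p) ≤ incompleteBetaPrime b p t := by
  rw [← setIntegral_Ioo_rpow_sub_one hp ht, ← integral_const_mul]
  refine setIntegral_mono_on ((integrableOn_Ioo_rpow_sub_one hp t).const_mul _)
    (integrableOn_add_one_rpow_mul_rpow hb hp t) measurableSet_Ioo fun u hu => ?_
  exact mul_le_mul_of_nonneg_right
    (rpow_le_rpow_of_nonpos (by linarith [hu.1]) (by linarith [hu.2]) (by linarith))
    (rpow_nonneg hu.1.le _)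

lemma incompleteBetaPrime_pos (hb : 0 ≤ b) (hp : 0 < p) (ht : 0 < t) :
    0 < incompleteBetaPrime b p t :=
  (by positivity : 0 < (t + 1) ^ (-b) * (t ^ p / p)).trans_le (le_incompleteBetaPrime hb hp ht.le)

lemma incompleteBetaPrime_mul_div_le (hb : 0 ≤ b) (hp : 0 < p) (hs : 0 < s) (hq : 0 ≤ q) :
    incompleteBetaPrime b p (s * q) / incompleteBetaPrime b p s ≤ (s + 1) ^ b * q ^ p := by
  rw [div_le_iff₀ (incompleteBetaPrime_pos hb hp hs)]
  calc incompleteBetaPrime b p (s * q)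
      ≤ (s * q) ^ p / p := incompleteBetaPrime_le hb hp (by positivity)
    _ = (s + 1) ^ b * q ^ p * ((s + 1) ^ (-b) * (s ^ p / p)) := by
        rw [mul_rpow hs.le hq, rpow_neg (by positivity)]
        field_simp
    _ ≤ (s + 1) ^ b * q ^ p * incompleteBetaPrime b p s := by
        gcongr
        exact le_incompleteBetaPrime hb hp hs.le

lemma le_incompleteBetaPrime_mul_div (hb : 0 ≤ b) (hp : 0 < p) (hs : 0 < s) (hq : 0 ≤ q) :
    (s * q + 1) ^ (-b) * q ^ p ≤ incompleteBetaPrime b p (s * q) / incompleteBetaPrime b p s := by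
  rw [le_div_iff₀ (incompleteBetaPrime_pos hb hp hs)]
  calc (s * q + 1) ^ (-b) * q ^ p * incompleteBetaPrime b p s
      ≤ (s * q + 1) ^ (-b) * q ^ p * (s ^ p / p) := by
        gcongr
        exact incompleteBetaPrime_le hb hp hs.le
    _ = (s * q + 1) ^ (-b) * ((s * q) ^ p / p) := by
        rw [mul_rpow hs.le hq]
        ring
    _ ≤ incompleteBetaPrime b p (s * q) := le_incompleteBetaPrime hb hp (by positivity)

lemma tendsto_incompleteBetaPrime_mul_div {ι : Type*} {l : Filter ι} {s q : ι → ℝ} {q₀ : ℝ}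
    (hb : 0 ≤ b) (hp : 0 < p) (hs : Tendsto s l (𝓝[>] 0)) (hq : Tendsto q l (𝓝 q₀))
    (hq_nonneg : ∀ᶠ i in l, 0 ≤ q i) :
    Tendsto (fun i => incompleteBetaPrime b p (s i * q i) / incompleteBetaPrime b p (s i)) l
      (𝓝 (q₀ ^ p)) := by
  obtain ⟨hs_lim, hs_pos⟩ := tendsto_nhdsWithin_iff.1 hs
  have hq_rpow : Tendsto (fun i => q i ^ p) l (𝓝 (q₀ ^ p)) := hq.rpow_const (Or.inr hp.le)
  have hlower : Tendsto (fun i => (s i * q i + 1) ^ (-b) * q i ^ p) l (𝓝 (q₀ ^ p)) := by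
    simpa using (((hs_lim.mul hq).add_const 1).rpow_const (p := -b) (by simp)).mul hq_rpow
  have hupper : Tendsto (fun i => (s i + 1) ^ b * q i ^ p) l (𝓝 (q₀ ^ p)) := by
    simpa using ((hs_lim.add_const 1).rpow_const (p := b) (by simp)).mul hq_rpow
  refine tendsto_of_tendsto_of_tendsto_of_le_of_le' hlower hupper ?_ ?_
  · filter_upwards [hs_pos, hq_nonneg] with i hsi hqi
    exact le_incompleteBetaPrime_mul_div hb hp hsi hqi
  · filter_upwards [hs_pos, hq_nonneg] with i hsi hqi
    exact incompleteBetaPrime_mul_div_le hb hp hsi hqi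

end IncompleteBetaPrime

lemma sq_sub_sq_div_sq_pos {r R : ℝ} (hr : r ∈ Ioo 0 R) : 0 < (R ^ 2 - r ^ 2) / r ^ 2 :=
  div_pos (sub_pos.2 (pow_lt_pow_left₀ hr.2 hr.1.le two_ne_zero)) (pow_pos hr.1 2)

lemma tendsto_sq_sub_sq_div_sq_nhdsLT {R : ℝ} (hR : 0 < R) :
    Tendsto (fun r : ℝ => (R ^ 2 - r ^ 2) / r ^ 2) (𝓝[<] R) (𝓝[>] 0) := by
  refine tendsto_nhdsWithin_iff.2 ⟨?_, ?_⟩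
  · have hcont : ContinuousAt (fun r : ℝ => (R ^ 2 - r ^ 2) / r ^ 2) R :=
      ContinuousAt.div (by fun_prop) (by fun_prop) (by positivity)
    simpa [ContinuousAt] using hcont.tendsto.mono_left nhdsWithin_le_nhds
  · filter_upwards [Ioo_mem_nhdsLT hR] with r hr
    exact sq_sub_sq_div_sq_pos hr

lemma rpow_sub_mul_div_sq_rpow {a t : ℝ} (α c : ℝ) (ha : 0 ≤ a) (ht : 0 < t) :
    t ^ (α - c) * (a / t ^ 2) ^ (α / 2) = t ^ (-c) * a ^ (α / 2) := by
  have hsq : (t ^ 2) ^ (α / 2) = t ^ α := by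
    rw [← rpow_natCast_mul ht.le, Nat.cast_ofNat, mul_div_cancel₀ _ two_ne_zero]
  rw [div_rpow ha (by positivity), hsq, sub_eq_neg_add, rpow_add ht]
  field_simp

lemma integrable_mul_of_continuousOn_tsupport {X : Type*} [TopologicalSpace X]
    [MeasurableSpace X] [OpensMeasurableSpace X] {μ : Measure X} [IsFiniteMeasureOnCompacts μ]
    {g k : X → ℝ} (hg : Continuous g) (hgc : HasCompactSupport g)
    (hk : ContinuousOn k (tsupport g)) : Integrable (fun z => g z * k z) μ :=
  (integrableOn_iff_integrable_of_support_subset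
      ((Function.support_mul_subset_left g k).trans (subset_tsupport g))).1
    ((hg.continuousOn.mul hk).integrableOn_compact' hgc (isClosed_tsupport g).measurableSet)

/-- `|x - z| ^ (α - c) ∫₀^ζ (u + 1) ^ (-b) u ^ (α / 2 - 1) du`, with `ζ = ζ_r(x, z)`, divided by the
same integral up to `(|x|² - r²) / r²`. For `b = d / 2` and `c = d` the numerator is, up to a
constant, the Green function of the isotropic `α`-stable process in `ℝᵈ` killed on entering the ball
of radius `r`. -/
noncomputable def normalizedGreen {E : Type*} [SeminormedAddCommGroup E] (b c α : ℝ) (x : E)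
    (r : ℝ) (z : E) : ℝ :=
  ‖x - z‖ ^ (α - c) *
      incompleteBetaPrime b (α / 2)
        ((‖x‖ ^ 2 - r ^ 2) * (‖z‖ ^ 2 - r ^ 2) / (r ^ 2 * ‖x - z‖ ^ 2)) /
    incompleteBetaPrime b (α / 2) ((‖x‖ ^ 2 - r ^ 2) / r ^ 2)

section NormalizedGreen

variable {E : Type*} [SeminormedAddCommGroup E] {b α : ℝ} {x z : E}

lemma norm_sub_pos_of_norm_lt (h : ‖x‖ < ‖z‖) : 0 < ‖x - z‖ := by
  rw [norm_sub_rev]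
  exact (sub_pos.2 h).trans_le (norm_sub_norm_le z x)

lemma continuousOn_norm_sub_rpow_mul_norm_rpow (x : E) (c α : ℝ) :
    ContinuousOn (fun z => ‖x - z‖ ^ (-c) * ‖z‖ ^ α) {z : E | ‖x‖ < ‖z‖} :=
  (ContinuousOn.rpow_const (by fun_prop) fun _ hz => Or.inl (norm_sub_pos_of_norm_lt hz).ne').mul
    (ContinuousOn.rpow_const (by fun_prop) fun _ hz =>
      Or.inl ((norm_nonneg x).trans_lt hz).ne')

lemma normalizedGreen_eq_mul_div (b c α : ℝ) (x : E) (r : ℝ) (z : E) :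
    normalizedGreen b c α x r z = ‖x - z‖ ^ (α - c) *
      (incompleteBetaPrime b (α / 2)
          ((‖x‖ ^ 2 - r ^ 2) / r ^ 2 * ((‖z‖ ^ 2 - r ^ 2) / ‖x - z‖ ^ 2)) /
        incompleteBetaPrime b (α / 2) ((‖x‖ ^ 2 - r ^ 2) / r ^ 2)) := by
  rw [normalizedGreen, div_mul_div_comm, mul_div_assoc]

lemma normalizedGreen_nonneg (b c α : ℝ) (x : E) (r : ℝ) (z : E) :
    0 ≤ normalizedGreen b c α x r z :=
  div_nonneg (mul_nonneg (rpow_nonneg (norm_nonneg _) _) (incompleteBetaPrime_nonneg ..))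
    (incompleteBetaPrime_nonneg ..)

lemma measurable_normalizedGreen [MeasurableSpace E] [OpensMeasurableSpace E] (hb : 0 ≤ b)
    (c : ℝ) (hα : 0 < α) (x : E) (r : ℝ) : Measurable (normalizedGreen b c α x r) := by
  have hdist : Measurable fun z : E => ‖x - z‖ := Continuous.measurable (by fun_prop)
  have hbeta : Measurable (incompleteBetaPrime b (α / 2)) :=
    (monotone_incompleteBetaPrime hb (half_pos hα)).measurable
  exact ((hdist.pow_const _).mul (hbeta.comp (by fun_prop))).div_const _

lemma tendsto_normalizedGreen (hb : 0 ≤ b) (c : ℝ) (hα : 0 < α) (hx : 0 < ‖x‖)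
    (hz : ‖x‖ < ‖z‖) :
    Tendsto (fun r => normalizedGreen b c α x r z) (𝓝[<] ‖x‖)
      (𝓝 (‖x - z‖ ^ (-c) * (‖z‖ ^ 2 - ‖x‖ ^ 2) ^ (α / 2))) := by
  have hq : Tendsto (fun r : ℝ => (‖z‖ ^ 2 - r ^ 2) / ‖x - z‖ ^ 2) (𝓝[<] ‖x‖)
      (𝓝 ((‖z‖ ^ 2 - ‖x‖ ^ 2) / ‖x - z‖ ^ 2)) :=
    (Continuous.tendsto (by fun_prop) _).mono_left nhdsWithin_le_nhds
  have hsq : ‖x‖ ^ 2 < ‖z‖ ^ 2 := pow_lt_pow_left₀ hz hx.le two_ne_zero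
  have hdist := norm_sub_pos_of_norm_lt hz
  have hq_nonneg := (hq.eventually_const_lt (div_pos (sub_pos.2 hsq) (pow_pos hdist 2))).mono
    fun _ => le_of_lt
  simp only [normalizedGreen_eq_mul_div]
  rw [← rpow_sub_mul_div_sq_rpow α c (sub_pos.2 hsq).le hdist]
  exact (tendsto_incompleteBetaPrime_mul_div hb (half_pos hα)
    (tendsto_sq_sub_sq_div_sq_nhdsLT hx) hq hq_nonneg).const_mul _

lemma normalizedGreen_le {r : ℝ} (hb : 0 ≤ b) (c : ℝ) (hα : 0 < α) (hr : r ∈ Ioo 0 ‖x‖)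
    (hz : ‖x‖ < ‖z‖) :
    normalizedGreen b c α x r z ≤
      ((‖x‖ ^ 2 - r ^ 2) / r ^ 2 + 1) ^ b * (‖x - z‖ ^ (-c) * ‖z‖ ^ α) := by
  have hs : 0 < (‖x‖ ^ 2 - r ^ 2) / r ^ 2 := sq_sub_sq_div_sq_pos hr
  have ha : 0 ≤ ‖z‖ ^ 2 - r ^ 2 :=
    sub_nonneg.2 (pow_le_pow_left₀ hr.1.le (hr.2.trans hz).le 2)
  have hdist := norm_sub_pos_of_norm_lt hz
  set s := (‖x‖ ^ 2 - r ^ 2) / r ^ 2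
  calc normalizedGreen b c α x r z
      ≤ ‖x - z‖ ^ (α - c) * ((s + 1) ^ b * ((‖z‖ ^ 2 - r ^ 2) / ‖x - z‖ ^ 2) ^ (α / 2)) := by
        rw [normalizedGreen_eq_mul_div]
        gcongr
        exact incompleteBetaPrime_mul_div_le hb (half_pos hα) hs (by positivity)
    _ = (s + 1) ^ b * (‖x - z‖ ^ (-c) * (‖z‖ ^ 2 - r ^ 2) ^ (α / 2)) := by
        rw [mul_left_comm, rpow_sub_mul_div_sq_rpow α c ha hdist]
    _ ≤ (s + 1) ^ b * (‖x - z‖ ^ (-c) * (‖z‖ ^ 2) ^ (α / 2)) := by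
        gcongr
        exact sub_le_self _ (sq_nonneg r)
    _ = (s + 1) ^ b * (‖x - z‖ ^ (-c) * ‖z‖ ^ α) := by
        rw [← rpow_natCast_mul (norm_nonneg z), Nat.cast_ofNat, mul_div_cancel₀ _ two_ne_zero]

lemma eventually_normalizedGreen_le (hb : 0 ≤ b) (c : ℝ) (hα : 0 < α) (hx : 0 < ‖x‖) :
    ∀ᶠ r in 𝓝[<] ‖x‖, ∀ z, ‖x‖ < ‖z‖ →
      normalizedGreen b c α x r z ≤ 2 ^ b * (‖x - z‖ ^ (-c) * ‖z‖ ^ α) := by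
  obtain ⟨hs_lim, hs_pos⟩ := tendsto_nhdsWithin_iff.1 (tendsto_sq_sub_sq_div_sq_nhdsLT hx)
  filter_upwards [hs_lim.eventually_lt_const one_pos, hs_pos, Ioo_mem_nhdsLT hx]
    with r hs_lt hs hr z hz
  refine (normalizedGreen_le hb c hα hr hz).trans ?_
  rw [mem_Ioi] at hs
  gcongr
  linarith

lemma tendsto_setIntegral_mul_normalizedGreen [MeasurableSpace E] [OpensMeasurableSpace E]
    {μ : Measure E} (hb : 0 ≤ b) (c : ℝ) (hα : 0 < α) (hx : 0 < ‖x‖) {g : E → ℝ}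
    (hg : IntegrableOn (fun z => g z * (‖x - z‖ ^ (-c) * ‖z‖ ^ α)) {z | ‖x‖ < ‖z‖} μ) :
    Tendsto (fun r => ∫ z in {z | ‖x‖ < ‖z‖}, g z * normalizedGreen b c α x r z ∂μ) (𝓝[<] ‖x‖)
      (𝓝 (∫ z in {z | ‖x‖ < ‖z‖},
        g z * (‖x - z‖ ^ (-c) * (‖z‖ ^ 2 - ‖x‖ ^ 2) ^ (α / 2)) ∂μ)) := by
  have hS : MeasurableSet {z : E | ‖x‖ < ‖z‖} :=
    (isOpen_lt continuous_const continuous_norm).measurableSet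
  have hg_meas : AEStronglyMeasurable g (μ.restrict {z | ‖x‖ < ‖z‖}) := by
    have hdist : Measurable fun z : E => ‖x - z‖ := Continuous.measurable (by fun_prop)
    have hweight : Measurable fun z : E => ‖x - z‖ ^ (-c) * ‖z‖ ^ α := by fun_prop
    refine ((hg.1.aemeasurable.div hweight.aemeasurable).congr
      (ae_restrict_of_forall_mem hS fun z hz => ?_)).aestronglyMeasurable
    have hz_pos : 0 < ‖z‖ := hx.trans hz
    have hdist_pos := norm_sub_pos_of_norm_lt hz
    exact mul_div_cancel_right₀ _ (by positivity)
  refine tendsto_integral_filter_of_dominated_convergence _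
    (.of_forall fun r => hg_meas.mul (measurable_normalizedGreen hb c hα x r).aestronglyMeasurable)
    ?_ (hg.norm.const_mul (2 ^ b))
    (ae_restrict_of_forall_mem hS fun z hz =>
      (tendsto_normalizedGreen hb c hα hx hz).const_mul (g z))
  filter_upwards [eventually_normalizedGreen_le hb c hα hx] with r hr
  refine ae_restrict_of_forall_mem hS fun z hz => ?_
  have hweight_nonneg : 0 ≤ ‖x - z‖ ^ (-c) * ‖z‖ ^ α := by positivity
  rw [norm_mul, norm_mul, norm_of_nonneg (normalizedGreen_nonneg ..),
    norm_of_nonneg hweight_nonneg, mul_left_comm]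
  exact mul_le_mul_of_nonneg_left (hr z hz) (norm_nonneg _)

end NormalizedGreen

theorem excursion_occupation_limit_general {E : Type*} [SeminormedAddCommGroup E]
    [MeasurableSpace E] [OpensMeasurableSpace E] {μ : Measure E} {b α : ℝ} (hb : 0 ≤ b) (c : ℝ)
    (hα : 0 < α) {x : E} (hx : 0 < ‖x‖) {g : E → ℝ}
    (hg : IntegrableOn (fun z => g z * (‖x - z‖ ^ (-c) * ‖z‖ ^ α)) {z | ‖x‖ < ‖z‖} μ) :
    Tendsto (fun r : ℝ =>
        (∫ z in {z | ‖x‖ < ‖z‖}, g z * ‖x - z‖ ^ (α - c) *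
            incompleteBetaPrime b (α / 2)
              ((‖x‖ ^ 2 - r ^ 2) * (‖z‖ ^ 2 - r ^ 2) / (r ^ 2 * ‖x - z‖ ^ 2)) ∂μ) /
          incompleteBetaPrime b (α / 2) ((‖x‖ ^ 2 - r ^ 2) / r ^ 2))
      (𝓝[<] ‖x‖)
      (𝓝 (∫ z in {z | ‖x‖ < ‖z‖},
        g z * ‖x - z‖ ^ (-c) * (‖z‖ ^ 2 - ‖x‖ ^ 2) ^ (α / 2) ∂μ)) := by
  simpa only [normalizedGreen, ← mul_div_assoc, ← mul_assoc, integral_div] using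
    tendsto_setIntegral_mul_normalizedGreen hb c hα hx hg

theorem excursion_occupation_limit
    (d : ℕ) (hd : 2 ≤ d) (α : ℝ) (hα0 : 0 < α) (hα2 : α < 2)
    (x : EuclideanSpace ℝ (Fin d)) (hx : x ≠ 0)
    (g : EuclideanSpace ℝ (Fin d) → ℝ) (hg : Continuous g)
    (hgc : HasCompactSupport g)
    (hgs : tsupport g ⊆ {z : EuclideanSpace ℝ (Fin d) | ‖x‖ < ‖z‖}) :
    Tendsto (fun r : ℝ =>
        (∫ z in {z : EuclideanSpace ℝ (Fin d) | ‖x‖ < ‖z‖},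
            g z * ‖x - z‖ ^ (α - (d : ℝ)) *
              ∫ u in Ioo (0 : ℝ)
                  ((‖x‖ ^ 2 - r ^ 2) * (‖z‖ ^ 2 - r ^ 2) / (r ^ 2 * ‖x - z‖ ^ 2)),
                (u + 1) ^ (-(d : ℝ) / 2) * u ^ (α / 2 - 1)) /
          (∫ u in Ioo (0 : ℝ) ((‖x‖ ^ 2 - r ^ 2) / r ^ 2),
            (u + 1) ^ (-(d : ℝ) / 2) * u ^ (α / 2 - 1)))
      (nhdsWithin ‖x‖ (Ioo 0 ‖x‖))
      (nhds (∫ z in {z : EuclideanSpace ℝ (Fin d) | ‖x‖ < ‖z‖},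
        g z * ‖x - z‖ ^ (-(d : ℝ)) * (‖z‖ ^ 2 - ‖x‖ ^ 2) ^ (α / 2))) := by
  have hint : IntegrableOn (fun z => g z * (‖x - z‖ ^ (-(d : ℝ)) * ‖z‖ ^ α)) {z | ‖x‖ < ‖z‖} :=
    (integrable_mul_of_continuousOn_tsupport hg hgc
      ((continuousOn_norm_sub_rpow_mul_norm_rpow x d α).mono hgs)).integrableOn
  rw [nhdsWithin_Ioo_eq_nhdsLT (norm_pos_iff.2 hx)]
  simpa only [incompleteBetaPrime, neg_div] using
    excursion_occupation_limit_general (b := d / 2) (by positivity) d hα0 (norm_pos_iff.2 hx) hint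
end

section
/- Let σ₁ denote the surface measure on the unit sphere 𝕊_{d-1} = {x ∈ ℝ^d : |x| = 1} normalised to have total mass 1. For every real γ ≥ 0, ∫_{𝕊_{d-1}} ( ∫_{|w|<1} |w|^{2γ} (1 - |w|^2)^{α/2} |φ - w|^{-d} dw ) σ₁(dφ) = π^{d/2} Γ(α/2) Γ(γ + d/2) / ( Γ(d/2) Γ(γ + (d+α)/2) ). Consequently the probability measure on the unit ball with density w ↦ π^{-d/2} (Γ((d+α)/2)/Γ(α/2)) ∫_{𝕊_{d-1}} (1-|w|^2)^{α/2} |φ - w|^{-d} σ₁(dφ) (the stationary distribution of Theorem 1.10) has radial part whose square is Beta((d)/2, α/2)-distributed. -/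
open MeasureTheory Real Set

/-- The surface measure on the unit sphere of `ℝ^d`, normalised to have total mass `1`. -/
noncomputable def normalisedSphereMeasure (d : ℕ) :
    Measure (Metric.sphere (0 : EuclideanSpace ℝ (Fin d)) 1) :=
  ((volume : Measure (EuclideanSpace ℝ (Fin d))).toSphere univ)⁻¹ •
    (volume : Measure (EuclideanSpace ℝ (Fin d))).toSphere

/-! The inner integral is the same for every `φ` on the sphere: against the Poisson kernel
`(1 - ‖w‖ ^ 2) / ‖w - φ‖ ^ d`, the function `‖w‖ ^ 2` on the ball has the law it has under Lebesgue
measure, so the moments are Beta integrals.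

Inversion in the unit sphere fixes `φ` and turns this claim into one about the exterior. There, in
polar coordinates centred at `φ`, the points `φ ± s • θ` satisfy
`‖φ ± s • θ‖ ^ 2 = s ^ 2 ± 2 a s + 1` with `a = ⟪φ, θ⟫`, and the volume element times the kernel is
`(s ± 2 a) ds dθ`. Completing the square, the two half-lines through `φ` in the directions `±θ`
together contribute `∫ v in (1, ∞), f v`, whatever the value of `a`. -/

open EuclideanGeometry Metric Module ProbabilityTheory
open scoped ENNReal RealInnerProductSpace

section OneVariable

lemma lintegral_Ioo_zero_one_eq_lintegral_Ioi_inv (f : ℝ → ℝ≥0∞) :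
    ∫⁻ u in Ioo 0 1, f u = ∫⁻ v in Ioi 1, ENNReal.ofReal ((v ^ 2)⁻¹) * f v⁻¹ := by
  have himage : Inv.inv '' Ioi (1 : ℝ) = Ioo 0 1 := by
    rw [image_inv_eq_inv, inv_Ioi₀ one_pos, inv_one]
  rw [← himage, lintegral_image_eq_lintegral_abs_deriv_mul measurableSet_Ioi
    (fun v hv ↦ (hasDerivAt_inv (one_pos.trans hv).ne').hasDerivWithinAt) inv_injective.injOn]
  simp only [abs_neg, abs_inv, abs_sq]

lemma lintegral_Ioi_comp_sq_add {c : ℝ} (hc : 0 ≤ c) (b : ℝ) (f : ℝ → ℝ≥0∞) :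
    ∫⁻ t in Ioi c, ENNReal.ofReal (2 * t) * f (t ^ 2 + b) = ∫⁻ v in Ioi (c ^ 2 + b), f v := by
  have himage : (fun t : ℝ ↦ t ^ 2 + b) '' Ioi c = Ioi (c ^ 2 + b) := by
    ext v
    constructor
    · rintro ⟨t, ht, rfl⟩
      exact add_lt_add_left (pow_lt_pow_left₀ ht hc two_ne_zero) b
    · intro hv
      have hcv : c ^ 2 < v - b := lt_sub_iff_add_lt.2 hv
      exact ⟨√(v - b), lt_sqrt_of_sq_lt hcv,
        by simp only [sq_sqrt ((sq_nonneg c).trans hcv.le), sub_add_cancel]⟩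
  have hmono : MonotoneOn (fun t : ℝ ↦ t ^ 2 + b) (Ioi c) := fun s hs t _ hst ↦
    add_le_add_left (pow_le_pow_left₀ (hc.trans (le_of_lt hs)) hst 2) b
  have hderiv (t : ℝ) : HasDerivAt (fun t : ℝ ↦ t ^ 2 + b) (2 * t) t := by
    simpa using (hasDerivAt_pow 2 t).add_const b
  rw [← himage, lintegral_image_eq_lintegral_deriv_mul_of_monotoneOn measurableSet_Ioi
    (fun t _ ↦ (hderiv t).hasDerivWithinAt) hmono]

-- For `a < 0`, the truncation in `ENNReal.ofReal` discards the segment `0 < s < -2 * a`.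
lemma lintegral_Ioi_zero_comp_sq_add_mul (a b : ℝ) (f : ℝ → ℝ≥0∞) :
    ∫⁻ s in Ioi 0, ENNReal.ofReal (s + 2 * a) * f (s ^ 2 + 2 * a * s + b) =
      ∫⁻ t in Ioi |a|, ENNReal.ofReal (t + a) * f (t ^ 2 + (b - a ^ 2)) := by
  rw [← lintegral_indicator measurableSet_Ioi, ← lintegral_indicator measurableSet_Ioi,
    ← lintegral_sub_right_eq_self _ a]
  refine lintegral_congr fun t ↦ ?_
  by_cases hmem : |a| < t
  · have hta : 0 < t - a := sub_pos.2 ((le_abs_self a).trans_lt hmem)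
    rw [indicator_of_mem (mem_Ioi.2 hta), indicator_of_mem (mem_Ioi.2 hmem)]
    ring_nf
  · rw [indicator_of_notMem (notMem_Ioi.2 (not_lt.1 hmem)), indicator_apply_eq_zero]
    intro hta
    have hta' : t + a ≤ 0 := by
      rcases le_abs.1 (not_lt.1 hmem) with h | h
      · exact absurd hta (notMem_Ioi.2 (sub_nonpos.2 h))
      · linarith
    rw [ENNReal.ofReal_of_nonpos (by linarith), zero_mul]

-- After the shifts `s = t - a` and `s = t + a` both terms live on `t > |a|`, where their weights
-- add up to `(t + a) + (t - a) = 2 * t`, the derivative of `t ^ 2`.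
lemma lintegral_Ioi_zero_comp_sq_add_mul_add_neg (a b : ℝ) {f : ℝ → ℝ≥0∞} (hf : Measurable f) :
    ∫⁻ s in Ioi 0, (ENNReal.ofReal (s + 2 * a) * f (s ^ 2 + 2 * a * s + b) +
        ENNReal.ofReal (s + 2 * -a) * f (s ^ 2 + 2 * -a * s + b)) =
      ∫⁻ v in Ioi b, f v := by
  rw [lintegral_add_left (by fun_prop), lintegral_Ioi_zero_comp_sq_add_mul,
    lintegral_Ioi_zero_comp_sq_add_mul, abs_neg, neg_sq, ← lintegral_add_left (by fun_prop)]
  calc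
    _ = ∫⁻ t in Ioi |a|, ENNReal.ofReal (2 * t) * f (t ^ 2 + (b - a ^ 2)) := by
      refine setLIntegral_congr_fun measurableSet_Ioi fun t ht ↦ ?_
      have hat := abs_lt.1 (mem_Ioi.1 ht)
      rw [← sub_eq_add_neg, ← add_mul, ← ENNReal.ofReal_add (by linarith) (by linarith)]
      ring_nf
    _ = ∫⁻ v in Ioi b, f v := by
      rw [lintegral_Ioi_comp_sq_add (abs_nonneg a), sq_abs, add_sub_cancel]

lemma lintegral_rpow_mul_one_sub_rpow {a b : ℝ} (ha : 0 < a) (hb : 0 < b) :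
    ∫⁻ u in Ioo 0 1, ENNReal.ofReal (u ^ (a - 1) * (1 - u) ^ (b - 1)) =
      ENNReal.ofReal (beta a b) := by
  have hbeta := beta_pos ha hb
  rw [← mul_one (ENNReal.ofReal (beta a b)), ← lintegral_betaPDF_eq_one ha hb, lintegral_betaPDF,
    ← lintegral_const_mul _ (by fun_prop)]
  refine lintegral_congr fun u ↦ ?_
  rw [← ENNReal.ofReal_mul hbeta.le, mul_assoc (1 / beta a b), one_div,
    mul_inv_cancel_left₀ hbeta.ne']

end OneVariable

section Polar

lemma two_mul_lintegral_eq_lintegral_add_sub {G : Type*} [AddGroup G] [MeasurableSpace G]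
    [MeasurableAdd G] [MeasurableNeg G] (μ : Measure G) [μ.IsAddLeftInvariant] [μ.IsNegInvariant]
    (c : G) {f : G → ℝ≥0∞} (hf : Measurable f) :
    2 * ∫⁻ x, f x ∂μ = ∫⁻ x, (f (c + x) + f (c - x)) ∂μ := by
  rw [lintegral_add_left (by fun_prop), lintegral_add_left_eq_self, lintegral_sub_left_eq_self,
    two_mul]

lemma lintegral_eq_lintegral_toSphere {E : Type*} [NormedAddCommGroup E] [NormedSpace ℝ E]
    [FiniteDimensional ℝ E] [Nontrivial E] [MeasurableSpace E] [BorelSpace E]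
    (μ : Measure E) [μ.IsAddHaarMeasure] {f : E → ℝ≥0∞} (hf : Measurable f) :
    ∫⁻ x, f x ∂μ = ∫⁻ θ : sphere (0 : E) 1, ∫⁻ s in Ioi (0 : ℝ),
      ENNReal.ofReal (s ^ (finrank ℝ E - 1)) * f (s • (θ : E)) ∂volume ∂μ.toSphere := by
  have hpolar (x : ({0}ᶜ : Set E)) : f x =
      f ((homeomorphUnitSphereProd E x).2.1 • ((homeomorphUnitSphereProd E x).1 : E)) := by
    rw [← homeomorphUnitSphereProd_symm_apply_coe, Homeomorph.symm_apply_apply]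
  have hmeas : Measurable fun p : sphere (0 : E) 1 × Ioi (0 : ℝ) ↦
      f ((p.2 : ℝ) • (p.1 : E)) := by fun_prop
  calc
    ∫⁻ x, f x ∂μ = ∫⁻ x : ({0}ᶜ : Set E), f x ∂(μ.comap (↑)) := by
      rw [lintegral_subtype_comap (measurableSet_singleton _).compl, restrict_compl_singleton]
    _ = ∫⁻ p, f ((p.2 : ℝ) • (p.1 : E))
          ∂(μ.toSphere.prod (.volumeIoiPow (finrank ℝ E - 1))) := by
      simp_rw [hpolar]
      exact μ.measurePreserving_homeomorphUnitSphereProd.lintegral_comp hmeas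
    _ = _ := by
      rw [lintegral_prod _ hmeas.aemeasurable]
      refine lintegral_congr fun θ ↦ ?_
      rw [Measure.volumeIoiPow, lintegral_withDensity_eq_lintegral_mul _ (by fun_prop)
        (by fun_prop)]
      exact lintegral_subtype_comap measurableSet_Ioi
        (fun s : ℝ ↦ ENNReal.ofReal (s ^ (finrank ℝ E - 1)) * f (s • (θ : E)))

end Polar

section Inversion

variable {E : Type*} [NormedAddCommGroup E] [InnerProductSpace ℝ E]

lemma norm_inversion_zero_one (x : E) : ‖inversion 0 1 x‖ = ‖x‖⁻¹ := by
  simpa only [dist_zero_right, one_pow, one_div] using dist_inversion_center (0 : E) x 1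

lemma abs_det_smul_reflection [FiniteDimensional ℝ E] (r : ℝ) (K : Submodule ℝ E) :
    |(r • (K.reflection : E →L[ℝ] E)).det| = |r| ^ finrank ℝ E := by
  have hdet : LinearMap.det ((K.reflection : E →L[ℝ] E) : E →ₗ[ℝ] E) = (-1) ^ finrank ℝ Kᗮ :=
    K.det_reflection
  rw [ContinuousLinearMap.det, ContinuousLinearMap.toLinearMap_smul, LinearMap.det_smul, hdet,
    abs_mul, abs_pow, abs_neg_one_pow, mul_one]

lemma image_inversion_compl_closedBall (c : E) {R : ℝ} (hR : 0 < R) :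
    inversion c R '' (closedBall c R)ᶜ = ball c R \ {c} := by
  ext y
  rw [(inversion_involutive c hR.ne').image_eq_preimage_symm, mem_preimage, mem_compl_iff,
    mem_closedBall, not_le, dist_inversion_center, mem_sdiff, mem_ball, mem_singleton_iff]
  rcases eq_or_ne y c with rfl | hy
  · simp [hR.le]
  · rw [lt_div_iff₀ (dist_pos.2 hy), sq, mul_lt_mul_iff_right₀ hR]
    simp only [hy, not_false_eq_true, and_true]

lemma lintegral_image_inversion [FiniteDimensional ℝ E] [MeasurableSpace E] [BorelSpace E]
    (μ : Measure E) [μ.IsAddHaarMeasure] {c : E} {R : ℝ} (hR : R ≠ 0) {s : Set E}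
    (hs : MeasurableSet s) (hcs : c ∉ s) (f : E → ℝ≥0∞) :
    ∫⁻ y in inversion c R '' s, f y ∂μ =
      ∫⁻ x in s, ENNReal.ofReal ((R / dist x c) ^ (2 * finrank ℝ E)) * f (inversion c R x) ∂μ := by
  rw [lintegral_image_eq_lintegral_abs_det_fderiv_mul μ hs
    (fun x hx ↦ (hasFDerivAt_inversion (ne_of_mem_of_not_mem hx hcs)).hasFDerivWithinAt)
    (inversion_injective c hR).injOn]
  simp only [abs_det_smul_reflection, abs_sq, pow_mul]

end Inversion

section PoissonKernel

variable {E : Type*} [NormedAddCommGroup E] [InnerProductSpace ℝ E]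

/-- The Poisson kernel of the unit ball with pole `e` on the unit sphere, normalised so that its
average over `e` is `1`. The formula is not restricted to the ball: outside it, the negative of this
function is the Poisson kernel of the exterior. -/
noncomputable def ballPoissonKernel (e x : E) : ℝ :=
  (1 - ‖x‖ ^ 2) / ‖x - e‖ ^ finrank ℝ E

lemma measurable_ballPoissonKernel [MeasurableSpace E] [BorelSpace E] (e : E) :
    Measurable (ballPoissonKernel e) := by
  unfold ballPoissonKernel
  fun_prop

lemma ballPoissonKernel_nonneg {e x : E} (hx : ‖x‖ ≤ 1) : 0 ≤ ballPoissonKernel e x :=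
  div_nonneg (sub_nonneg.2 (pow_le_one₀ (norm_nonneg x) hx)) (by positivity)

lemma ballPoissonKernel_nonpos {e x : E} (hx : 1 ≤ ‖x‖) : ballPoissonKernel e x ≤ 0 :=
  div_nonpos_of_nonpos_of_nonneg (sub_nonpos.2 (one_le_pow₀ hx)) (by positivity)

lemma norm_add_smul_sq {e θ : E} (he : ‖e‖ = 1) (hθ : ‖θ‖ = 1) (s : ℝ) :
    ‖e + s • θ‖ ^ 2 = s ^ 2 + 2 * ⟪e, θ⟫ * s + 1 := by
  rw [norm_add_sq_real, inner_smul_right, norm_smul, he, hθ, mul_one, norm_eq_abs, sq_abs]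
  ring

lemma pow_mul_neg_ballPoissonKernel_add_smul [FiniteDimensional ℝ E] [Nontrivial E] {e θ : E}
    (he : ‖e‖ = 1) (hθ : ‖θ‖ = 1) {s : ℝ} (hs : 0 < s) :
    s ^ (finrank ℝ E - 1) * -ballPoissonKernel e (e + s • θ) = s + 2 * ⟪e, θ⟫ := by
  have hpow : s ^ (finrank ℝ E - 1) * s = s ^ finrank ℝ E := pow_sub_one_mul finrank_pos.ne' s
  rw [ballPoissonKernel, norm_add_smul_sq he hθ, add_sub_cancel_left, norm_smul, hθ, mul_one,
    norm_eq_abs, abs_of_pos hs, ← hpow]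
  field_simp
  ring

lemma ballPoissonKernel_inversion {e x : E} (he : ‖e‖ = 1) (hx : x ≠ 0) :
    ballPoissonKernel e (inversion 0 1 x) =
      ‖x‖ ^ finrank ℝ E * (‖x‖ ^ 2)⁻¹ * -ballPoissonKernel e x := by
  have hdist : ‖inversion 0 1 x - e‖ = ‖x - e‖ / ‖x‖ := by
    have hfix : inversion 0 1 e = e := inversion_of_mem_sphere (mem_sphere_zero_iff_norm.2 he)
    have he0 : e ≠ 0 := norm_ne_zero_iff.1 (he ▸ one_ne_zero)
    rw [← dist_eq_norm, ← hfix, dist_inversion_inversion hx he0, dist_zero_right,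
      dist_zero_right, he, hfix, dist_eq_norm]
    ring
  have hx0 : ‖x‖ ≠ 0 := norm_ne_zero_iff.2 hx
  rw [ballPoissonKernel, ballPoissonKernel, norm_inversion_zero_one, hdist, div_pow, inv_pow,
    div_div_eq_mul_div]
  field_simp
  ring

lemma inversion_jacobian_mul_ballPoissonKernel {e x : E} (he : ‖e‖ = 1) (hx : x ≠ 0) :
    (1 / dist x 0) ^ (2 * finrank ℝ E) * ballPoissonKernel e (inversion 0 1 x) =
      -ballPoissonKernel e x *
        (((‖x‖ ^ 2) ^ 2)⁻¹ * (‖x‖ ^ 2)⁻¹ ^ ((finrank ℝ E : ℝ) / 2 - 1)) := by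
  have hpos : 0 < ‖x‖ := norm_pos_iff.2 hx
  have hpow : (‖x‖ ^ 2)⁻¹ ^ ((finrank ℝ E : ℝ) / 2 - 1) = ‖x‖ ^ 2 / ‖x‖ ^ finrank ℝ E := by
    rw [rpow_sub_one (by positivity), inv_rpow (by positivity), ← rpow_natCast_mul hpos.le,
      Nat.cast_ofNat, mul_div_cancel₀ _ two_ne_zero, rpow_natCast, div_inv_eq_mul, inv_mul_eq_div]
  rw [ballPoissonKernel_inversion he hx, hpow, dist_zero_right, pow_mul', div_pow, one_pow]
  field_simp

lemma moment_integrand_eq_ballPoissonKernel_mul (e : E) {α γ : ℝ} {w : E} (hw : ‖w‖ < 1) :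
    ‖w‖ ^ (2 * γ) * (1 - ‖w‖ ^ 2) ^ (α / 2) * ‖e - w‖ ^ (-(finrank ℝ E : ℝ)) =
      ballPoissonKernel e w * ((‖w‖ ^ 2) ^ γ * (1 - ‖w‖ ^ 2) ^ (α / 2 - 1)) := by
  have hpos : 0 < 1 - ‖w‖ ^ 2 := sub_pos.2 (pow_lt_one₀ (norm_nonneg w) hw two_ne_zero)
  rw [ballPoissonKernel, rpow_sub_one hpos.ne', rpow_mul (norm_nonneg w), rpow_two,
    rpow_neg (norm_nonneg _), rpow_natCast, norm_sub_rev]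
  field_simp

variable [FiniteDimensional ℝ E] [Nontrivial E] [MeasurableSpace E] [BorelSpace E]
  (μ : Measure E) [μ.IsAddHaarMeasure]

-- The truncation in `ENNReal.ofReal` restricts this integral to the exterior of the unit ball.
lemma lintegral_neg_ballPoissonKernel_mul_radial {e : E} (he : ‖e‖ = 1) {f : ℝ → ℝ≥0∞}
    (hf : Measurable f) :
    ∫⁻ x, ENNReal.ofReal (-ballPoissonKernel e x) * f (‖x‖ ^ 2) ∂μ =
      μ.toSphere univ / 2 * ∫⁻ v in Ioi 1, f v := by
  have hK := measurable_ballPoissonKernel e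
  set g : E → ℝ≥0∞ := fun x ↦ ENNReal.ofReal (-ballPoissonKernel e x) * f (‖x‖ ^ 2)
  have hray {θ : E} (hθ : ‖θ‖ = 1) {s : ℝ} (hs : 0 < s) :
      ENNReal.ofReal (s ^ (finrank ℝ E - 1)) * g (e + s • θ) =
        ENNReal.ofReal (s + 2 * ⟪e, θ⟫) * f (s ^ 2 + 2 * ⟪e, θ⟫ * s + 1) := by
    simp only [g]
    rw [← mul_assoc, ← ENNReal.ofReal_mul (by positivity),
      pow_mul_neg_ballPoissonKernel_add_smul he hθ hs, norm_add_smul_sq he hθ]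
  have hdouble : 2 * ∫⁻ x, g x ∂μ = μ.toSphere univ * ∫⁻ v in Ioi 1, f v := by
    rw [two_mul_lintegral_eq_lintegral_add_sub μ e (by fun_prop),
      lintegral_eq_lintegral_toSphere μ (by fun_prop), mul_comm, ← lintegral_const]
    refine lintegral_congr fun θ ↦ ?_
    have hθ : ‖(θ : E)‖ = 1 := norm_eq_of_mem_sphere θ
    rw [← lintegral_Ioi_zero_comp_sq_add_mul_add_neg ⟪e, (θ : E)⟫ 1 hf]
    refine setLIntegral_congr_fun measurableSet_Ioi fun s hs ↦ ?_
    rw [mul_add, sub_eq_add_neg, ← smul_neg, hray hθ hs, hray ((norm_neg _).trans hθ) hs,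
      inner_neg_right]
  rw [← ENNReal.mul_div_right_comm, ← hdouble, mul_comm 2,
    ENNReal.mul_div_cancel_right two_ne_zero ENNReal.ofNat_ne_top]

lemma setLIntegral_ball_ballPoissonKernel_mul_radial {e : E} (he : ‖e‖ = 1) {f : ℝ → ℝ≥0∞}
    (hf : Measurable f) :
    ∫⁻ w in ball 0 1, ENNReal.ofReal (ballPoissonKernel e w) * f (‖w‖ ^ 2) ∂μ =
      μ.toSphere univ / 2 *
        ∫⁻ u in Ioo 0 1, ENNReal.ofReal (u ^ ((finrank ℝ E : ℝ) / 2 - 1)) * f u := by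
  set g : ℝ → ℝ≥0∞ := fun u ↦ ENNReal.ofReal (u ^ ((finrank ℝ E : ℝ) / 2 - 1)) * f u
  have hg : Measurable g := by fun_prop
  have hexterior : MeasurableSet (closedBall (0 : E) 1)ᶜ := measurableSet_closedBall.compl
  calc
    _ = ∫⁻ w in inversion 0 1 '' (closedBall 0 1)ᶜ,
          ENNReal.ofReal (ballPoissonKernel e w) * f (‖w‖ ^ 2) ∂μ := by
      rw [image_inversion_compl_closedBall 0 one_pos]
      exact (setLIntegral_congr (sdiff_null_ae_eq_self (measure_singleton 0))).symm
    _ = ∫⁻ x in (closedBall 0 1)ᶜ, ENNReal.ofReal (-ballPoissonKernel e x) *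
          (ENNReal.ofReal (((‖x‖ ^ 2) ^ 2)⁻¹) * g (‖x‖ ^ 2)⁻¹) ∂μ := by
      rw [lintegral_image_inversion μ one_ne_zero hexterior (by simp)]
      refine setLIntegral_congr_fun hexterior fun x hx ↦ ?_
      have hx1 : 1 < ‖x‖ := by simpa using hx
      have hx0 : x ≠ 0 := norm_pos_iff.1 (one_pos.trans hx1)
      simp only [g]
      rw [norm_inversion_zero_one, inv_pow, ← mul_assoc, ← mul_assoc, ← mul_assoc,
        ← ENNReal.ofReal_mul (by positivity), inversion_jacobian_mul_ballPoissonKernel he hx0,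
        ENNReal.ofReal_mul (neg_nonneg.2 (ballPoissonKernel_nonpos hx1.le)),
        ENNReal.ofReal_mul (by positivity), ← mul_assoc]
    _ = ∫⁻ x, ENNReal.ofReal (-ballPoissonKernel e x) *
          (ENNReal.ofReal (((‖x‖ ^ 2) ^ 2)⁻¹) * g (‖x‖ ^ 2)⁻¹) ∂μ := by
      rw [← lintegral_indicator hexterior]
      refine lintegral_congr fun x ↦ indicator_apply_eq_self.2 fun hx ↦ ?_
      have hx1 : ‖x‖ ≤ 1 := by simpa using hx
      rw [ENNReal.ofReal_of_nonpos (neg_nonpos.2 (ballPoissonKernel_nonneg hx1)), zero_mul]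
    _ = μ.toSphere univ / 2 * ∫⁻ v in Ioi 1, ENNReal.ofReal ((v ^ 2)⁻¹) * g v⁻¹ :=
      lintegral_neg_ballPoissonKernel_mul_radial μ he
        (f := fun v ↦ ENNReal.ofReal ((v ^ 2)⁻¹) * g v⁻¹) (by fun_prop)
    _ = μ.toSphere univ / 2 * ∫⁻ u in Ioo 0 1, g u := by
      rw [lintegral_Ioo_zero_one_eq_lintegral_Ioi_inv]

end PoissonKernel

section Moments

variable {E : Type*} [NormedAddCommGroup E] [InnerProductSpace ℝ E] [FiniteDimensional ℝ E]
  [Nontrivial E] [MeasurableSpace E] [BorelSpace E]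

lemma toSphere_volume_real_univ :
    (volume : Measure E).toSphere.real univ =
      2 * π ^ ((finrank ℝ E : ℝ) / 2) / Real.Gamma ((finrank ℝ E : ℝ) / 2) := by
  have hn : (0 : ℝ) < finrank ℝ E := Nat.cast_pos.2 finrank_pos
  have hGamma : Real.Gamma ((finrank ℝ E : ℝ) / 2) ≠ 0 := (Gamma_pos_of_pos (by positivity)).ne'
  rw [Measure.toSphere_real_apply_univ, measureReal_def, InnerProductSpace.volume_ball,
    ENNReal.ofReal_one, one_pow, one_mul, ENNReal.toReal_ofReal (by positivity),
    Gamma_add_one (by positivity), sqrt_eq_rpow, ← rpow_mul_natCast pi_pos.le,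
    one_div_mul_eq_div]
  field_simp

variable (μ : Measure E) [μ.IsAddHaarMeasure]

lemma lintegral_ball_moment {e : E} (he : ‖e‖ = 1) {α γ : ℝ} (hα : 0 < α)
    (hγ : 0 < γ + (finrank ℝ E : ℝ) / 2) :
    ∫⁻ w in ball 0 1, ENNReal.ofReal
        (‖w‖ ^ (2 * γ) * (1 - ‖w‖ ^ 2) ^ (α / 2) * ‖e - w‖ ^ (-(finrank ℝ E : ℝ))) ∂μ =
      μ.toSphere univ / 2 *
        ENNReal.ofReal (beta (γ + (finrank ℝ E : ℝ) / 2) (α / 2)) := by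
  calc
    _ = ∫⁻ w in ball 0 1, ENNReal.ofReal (ballPoissonKernel e w) *
          ENNReal.ofReal ((‖w‖ ^ 2) ^ γ * (1 - ‖w‖ ^ 2) ^ (α / 2 - 1)) ∂μ := by
      refine setLIntegral_congr_fun measurableSet_ball fun w hw ↦ ?_
      have hw1 : ‖w‖ < 1 := mem_ball_zero_iff.1 hw
      rw [moment_integrand_eq_ballPoissonKernel_mul e hw1,
        ENNReal.ofReal_mul (ballPoissonKernel_nonneg hw1.le)]
    _ = μ.toSphere univ / 2 * ∫⁻ u in Ioo 0 1, ENNReal.ofReal (u ^ ((finrank ℝ E : ℝ) / 2 - 1)) *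
          ENNReal.ofReal (u ^ γ * (1 - u) ^ (α / 2 - 1)) :=
      setLIntegral_ball_ballPoissonKernel_mul_radial μ he
        (f := fun u ↦ ENNReal.ofReal (u ^ γ * (1 - u) ^ (α / 2 - 1))) (by fun_prop)
    _ = _ := by
      rw [← lintegral_rpow_mul_one_sub_rpow hγ (by positivity)]
      congr 1
      refine setLIntegral_congr_fun measurableSet_Ioo fun u hu ↦ ?_
      rw [← ENNReal.ofReal_mul (rpow_nonneg hu.1.le _), ← mul_assoc, ← rpow_add hu.1,
        sub_add_eq_add_sub, add_comm γ]

lemma integral_ball_moment {e : E} (he : ‖e‖ = 1) {α γ : ℝ} (hα : 0 < α)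
    (hγ : 0 < γ + (finrank ℝ E : ℝ) / 2) :
    ∫ w in ball 0 1,
        ‖w‖ ^ (2 * γ) * (1 - ‖w‖ ^ 2) ^ (α / 2) * ‖e - w‖ ^ (-(finrank ℝ E : ℝ)) ∂μ =
      μ.toSphere.real univ / 2 * beta (γ + (finrank ℝ E : ℝ) / 2) (α / 2) := by
  have hnonneg : ∀ᵐ w ∂μ.restrict (ball 0 1),
      0 ≤ ‖w‖ ^ (2 * γ) * (1 - ‖w‖ ^ 2) ^ (α / 2) * ‖e - w‖ ^ (-(finrank ℝ E : ℝ)) := by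
    filter_upwards [ae_restrict_mem measurableSet_ball] with w hw
    have hw1 : 0 ≤ 1 - ‖w‖ ^ 2 :=
      sub_nonneg.2 (pow_le_one₀ (norm_nonneg w) (mem_ball_zero_iff.1 hw).le)
    positivity
  rw [integral_eq_lintegral_of_nonneg_ae hnonneg (Measurable.aestronglyMeasurable (by fun_prop)),
    lintegral_ball_moment μ he hα hγ, ENNReal.toReal_mul, ENNReal.toReal_div, measureReal_def,
    ENNReal.toReal_ofReal (beta_pos hγ (by positivity)).le, ENNReal.toReal_ofNat]

theorem stationary_distribution_moments_general (σ : Measure (sphere (0 : E) 1))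
    [IsProbabilityMeasure σ] {α γ : ℝ} (hα : 0 < α) (hγ : 0 < γ + (finrank ℝ E : ℝ) / 2) :
    ∫ φ : sphere (0 : E) 1,
        (∫ w in ball 0 1,
          ‖w‖ ^ (2 * γ) * (1 - ‖w‖ ^ 2) ^ (α / 2) * ‖(φ : E) - w‖ ^ (-(finrank ℝ E : ℝ))) ∂σ =
      π ^ ((finrank ℝ E : ℝ) / 2) * Real.Gamma (α / 2) * Real.Gamma (γ + (finrank ℝ E : ℝ) / 2) /
        (Real.Gamma ((finrank ℝ E : ℝ) / 2) *
          Real.Gamma (γ + ((finrank ℝ E : ℝ) + α) / 2)) := by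
  simp_rw [integral_ball_moment volume (norm_eq_of_mem_sphere _) hα hγ]
  rw [integral_const, probReal_univ, one_smul, toSphere_volume_real_univ, beta, add_assoc,
    ← add_div]
  ring

end Moments

instance instIsProbabilityMeasureNormalisedSphereMeasure (d : ℕ) [NeZero d] :
    IsProbabilityMeasure (normalisedSphereMeasure d) where
  measure_univ := by
    rw [normalisedSphereMeasure, Measure.smul_apply, smul_eq_mul]
    exact ENNReal.inv_mul_cancel (Measure.measure_univ_ne_zero.2 (Measure.toSphere_ne_zero _))
      (measure_ne_top _ _)

theorem stationary_distribution_moments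
    (d : ℕ) (hd : 2 ≤ d) (α : ℝ) (hα0 : 0 < α) (hα2 : α < 2)
    (γ : ℝ) (hγ : 0 ≤ γ) :
    ∫ φ : Metric.sphere (0 : EuclideanSpace ℝ (Fin d)) 1,
        (∫ w in {w : EuclideanSpace ℝ (Fin d) | ‖w‖ < 1},
          ‖w‖ ^ (2 * γ) * (1 - ‖w‖ ^ 2) ^ (α / 2) * ‖(φ : EuclideanSpace ℝ (Fin d)) - w‖ ^ (-(d : ℝ)))
        ∂(normalisedSphereMeasure d)
      = π ^ ((d : ℝ) / 2) * Real.Gamma (α / 2) * Real.Gamma (γ + (d : ℝ) / 2) /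
          (Real.Gamma ((d : ℝ) / 2) * Real.Gamma (γ + ((d : ℝ) + α) / 2)) := by
  have : NeZero d := ⟨by positivity⟩
  simpa only [finrank_euclideanSpace_fin, ball_zero_eq] using
    stationary_distribution_moments_general (normalisedSphereMeasure d) hα0
      (by rw [finrank_euclideanSpace_fin]; positivity)
end
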